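/- Let G be a connected simple graph on the vertex set [n] having a vertex of degree 1, labeled n, and let G′ be the graph on vertex set [n+1] obtained from G by attaching the edge {n, n+1}. Let S = K[x_1,…,x_n,y_1,…,y_n] and S′ = S[x_{n+1}, y_{n+1}]. Then S/J_G is approximately Cohen-Macaulay if and only if S′/J_{G′} is approximately Cohen-Macaulay. -/

import Mathlib

/-!
Write `dim I`, `depth I` for the dimension and depth of the quotient by `I`. For a reduced
homogeneous ideal `J` of dimension `d ≥ 1`, approximate Cohen-Macaulayness means that
`depth J ≥ d - 1` and that some homogeneous ideal `U ⊇ J`, contained in every prime of dimension at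
least `d` over `J`, has a Cohen-Macaulay quotient of dimension `d`. Given a witness `f`, one takes
`U = J : f`; conversely a suitable homogeneous element of `J : U` is a witness (`exists_of_isACM`,
`isACM_of`). Depth is handled through Rees' theorem (`dep_iff_ext`), which gives the depth
inequalities along `0 → R/(B : f) → R/B → R/(B + (f)) → 0`, and through the bound
`depth I ≤ dim Q` for every associated prime `Q` of `I` (`dep_le_pdim_hAss`).

A graph whose last vertex `v` has degree one is itself obtained from a graph `H` by attaching an
edge at a vertex `u`. With `J = J_G`, `(a, b)` the variables of `v` and `(X, Y)` those of the new
vertex, `J' = J_{G'} = J S' + (aY - bX)`. Since `v` is a free vertex, no minimal prime of `J`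
contains `a`, so `a` is regular modulo `J` and `aY - bX` is regular modulo `J S'`; hence
`depth J' = depth J + 1`, and likewise `dim J' = dim J + 1`.

*From `G` to `G'`* (`isACM_extend`): `a` is regular modulo `U = J : f` as well, and
`U S' + (aY - bX)` is the required ideal for `J'`.

*From `G'` to `G`* (`isACM_of_extend`): let `dim J' = e + 2`, let `U' = J' : f` be Cohen-Macaulay of
dimension `e + 2`, and let `U` be its contraction. Minimal primes of `J'` are stable under
substituting zero for `X` and `Y`, so `depth U ≥ e` (`dep_comap_liftS`). What has to be shown is
`depth U = e + 1`, and this follows once `W = U S' + (aY - bX)` equals `U'`, since `a` is regular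
modulo `U`. If `W ≠ U'`, some associated prime `Q' = W : z` with `z ∈ U'` contains `f`; comparing
dimensions, `Q'` is a minimal prime of `J'` of dimension `e + 1`.

* If `a ∉ Q'`, some power of `a` times `z` is modulo `aY - bX` a polynomial in `X` alone; this
  polynomial lies in `U'`, hence in `U S'`, and so the power of `a` lies in `Q'`, a contradiction.
* If `a ∈ Q'`, then `Q'` is generated by a prime `P` of the polynomial ring of `H` together with
  `a, b`, and the variables of `u` are not in `P`. A minimal prime `P'` of `J'` not containing `f`
  whose contraction lies below that of `Q'` has dimension at least `e + 2` and contracts to the same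
  `P`. If `a ∈ P'`, it contains `Q'` and thus `f`. Otherwise the relations of the two attached edges
  bound its dimension by `dim P + 2 = e + 1`. Both are impossible.

The required facts on binomial edge ideals and their minimal primes (radicality, stability under
killing the variables of a vertex, the exclusion of free vertices, and `not_mem_of_mem`) follow by
induction from Ohtani's decomposition `J_G = J_{G_u} ∩ ((x_u, y_u) + J_{G - u})` (`bei_eq_inf`),
where `G_u` completes the neighbourhood of `u`. The induction ends with disjoint unions of complete
graphs, whose ideals are prime because they are toric (`bei_isPrime`).
-/


open MvPolynomial CategoryTheory Opposite

noncomputable section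

namespace BEIPaper

/-- The `x_i` variable of the polynomial ring `K[x_1,…,x_n,y_1,…,y_n]`,
which we realize as `MvPolynomial (σ ⊕ σ) K`, where `Sum.inl i ↦ x_i` and
`Sum.inr i ↦ y_i`. -/
def xv (K : Type) [Field K] {σ : Type} (i : σ) : MvPolynomial (σ ⊕ σ) K :=
  X (Sum.inl i)

/-- The `y_i` variable. -/
def yv (K : Type) [Field K] {σ : Type} (i : σ) : MvPolynomial (σ ⊕ σ) K :=
  X (Sum.inr i)

/-- The binomial edge ideal of a graph `G` on the vertex set `[n]`:
generated by the binomials `x_i y_j - x_j y_i` for edges `{i, j}` with `i < j`. -/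
def bei (K : Type) [Field K] {n : ℕ} (G : SimpleGraph (Fin n)) :
    Ideal (MvPolynomial (Fin n ⊕ Fin n) K) :=
  Ideal.span {f | ∃ i j : Fin n, i < j ∧ G.Adj i j ∧
    f = xv K i * yv K j - xv K j * yv K i}

/-- The prime ideal `P_T(G)`: generated by `{x_i, y_i : i ∈ T}` together with the
binomial edge ideals of the complete graphs on the vertex sets of the connected
components of the induced subgraph of `G` on `[n] ∖ T` (equivalently, all binomials
`x_i y_j - x_j y_i` where `i < j` lie outside `T` in the same connected component). -/
def PT (K : Type) [Field K] {n : ℕ} (G : SimpleGraph (Fin n)) (T : Set (Fin n)) :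
    Ideal (MvPolynomial (Fin n ⊕ Fin n) K) :=
  Ideal.span ((xv K '' T) ∪ (yv K '' T) ∪
    {f | ∃ i j : Fin n, ∃ (hi : i ∈ Tᶜ) (hj : j ∈ Tᶜ), i < j ∧
      (G.induce Tᶜ).Reachable ⟨i, hi⟩ ⟨j, hj⟩ ∧
      f = xv K i * yv K j - xv K j * yv K i})

/-- `c(T)`: the number of connected components of the induced subgraph of `G`
on `[n] ∖ T`. -/
def ncomp {n : ℕ} (G : SimpleGraph (Fin n)) (T : Set (Fin n)) : ℕ :=
  Nat.card (G.induce Tᶜ).ConnectedComponent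

/-- The graded (irrelevant) maximal ideal of a polynomial ring, generated by
all the variables. -/
def mIdeal (K : Type) [Field K] (σ : Type) : Ideal (MvPolynomial σ K) :=
  Ideal.span (Set.range X)

/-- The depth of a module `M` with respect to an ideal `I`: the supremum of lengths
of `M`-regular sequences consisting of elements of `I`. -/
def depth {R : Type} [CommRing R] (I : Ideal R) (M : Type) [AddCommGroup M]
    [Module R M] : ℕ∞ :=
  sSup {k : ℕ∞ | ∃ rs : List R, (rs.length : ℕ∞) = k ∧ (∀ r ∈ rs, r ∈ I) ∧
    RingTheory.Sequence.IsRegular M rs}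

/-- The (Krull) dimension of a module: the Krull dimension of `R` modulo the
annihilator of `M`. -/
def mdim (R : Type) [CommRing R] (M : Type) [AddCommGroup M] [Module R M] :
    WithBot ℕ∞ :=
  ringKrullDim (R ⧸ Module.annihilator R M)

/-- `M` is a Cohen-Macaulay `R`-module of dimension `d` (depth and dimension both
being taken with respect to the given (maximal graded) ideal `I`). -/
def IsCMmodOfDim {R : Type} [CommRing R] (I : Ideal R) (M : Type) [AddCommGroup M]
    [Module R M] (d : ℕ) : Prop :=
  (depth I M : WithBot ℕ∞) = mdim R M ∧ mdim R M = (d : ℕ∞)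

/-- The quotient `S/J` of a polynomial ring `S` by an ideal `J` is a Cohen-Macaulay
ring: its depth with respect to the graded maximal ideal equals its Krull dimension. -/
def IsCMQuot (K : Type) [Field K] {σ : Type} (J : Ideal (MvPolynomial σ K)) : Prop :=
  (depth (mIdeal K σ) (MvPolynomial σ K ⧸ J) : WithBot ℕ∞) =
    ringKrullDim (MvPolynomial σ K ⧸ J)

/-- `S/I` is approximately Cohen-Macaulay: there is a homogeneous element `x` of
positive degree in the irrelevant ideal of `R = S/I` (i.e. the image of a homogeneous
polynomial `f` of positive degree) such that `R/x^m R = S/(I + (f^m))` is a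
Cohen-Macaulay ring of dimension `dim R - 1` for all `m ≥ 1`. -/
def IsACM (K : Type) [Field K] {σ : Type} (I : Ideal (MvPolynomial σ K)) : Prop :=
  ∃ (d : ℕ) (f : MvPolynomial σ K), 0 < d ∧ f.IsHomogeneous d ∧
    ∀ m : ℕ, 1 ≤ m →
      IsCMQuot K (I ⊔ Ideal.span {f ^ m}) ∧
      ringKrullDim (MvPolynomial σ K ⧸ (I ⊔ Ideal.span {f ^ m})) + 1 =
        ringKrullDim (MvPolynomial σ K ⧸ I)

/-- The Hilbert series of `S/I` (for a homogeneous ideal `I`), as a power series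
over `ℤ`: the `m`-th coefficient is the `K`-dimension of the degree-`m` graded
component of `S/I`, i.e. of the image of the space of degree-`m` homogeneous
polynomials in `S/I`. -/
def hseries (K : Type) [Field K] {σ : Type} (I : Ideal (MvPolynomial σ K)) :
    PowerSeries ℤ :=
  PowerSeries.mk fun m =>
    (Module.finrank K (Submodule.map (Ideal.Quotient.mkₐ K I).toLinearMap
      (homogeneousSubmodule σ K m)) : ℤ)

/-- The formal power series variable `t`. -/
def t : PowerSeries ℤ := PowerSeries.X

/-- The equidimensional part `U_S(I)` of (a minimal primary decomposition of) `I`: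
the intersection of the primary components `I(p)` over the associated primes `p`
with `dim S/p = dim S/I`.  Any such `p` is a minimal prime of `I`, so its primary
component is independent of the decomposition and equals the saturation
`{x | ∃ s ∉ p, s * x ∈ I}`. -/
def USideal {R : Type} [CommRing R] (I : Ideal R) : Ideal R :=
  sInf {J | ∃ p ∈ associatedPrimes R (R ⧸ I),
    ringKrullDim (R ⧸ p) = ringKrullDim (R ⧸ I) ∧
    J = Ideal.span {x | ∃ s ∉ p, s * x ∈ I}}

/-- `Ext_S^j(S/I, S)`, as an object of `ModuleCat S`.  The `i`-th module of
deficiency of `S/I` is `ω^i(S/I) = Ext_S^{2n-i}(S/I, S)`, i.e. `extSI K I (2*n - i)`. -/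
def extSI (K : Type) [Field K] {σ : Type} (I : Ideal (MvPolynomial σ K)) (j : ℕ) :
    ModuleCat (MvPolynomial σ K) :=
  ((Ext (MvPolynomial σ K) (ModuleCat (MvPolynomial σ K)) j).obj
      (op (ModuleCat.of (MvPolynomial σ K) (MvPolynomial σ K ⧸ I)))).obj
    (ModuleCat.of (MvPolynomial σ K) (MvPolynomial σ K))

/-- The line (path) graph on `[n]` (with `[n]` realized as `Fin n`), with edges
`{i, i+1}` for `1 ≤ i ≤ n-1`. -/
def lineG (n : ℕ) : SimpleGraph (Fin n) :=
  SimpleGraph.fromRel (fun a b => (b : ℕ) = (a : ℕ) + 1)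

/-- The cycle of length `n` on `[n]` (with `[n]` realized as `Fin n`), with edges
`{i, i+1}` for `1 ≤ i ≤ n-1` together with `{1, n}`. -/
def cycleG (n : ℕ) : SimpleGraph (Fin n) :=
  SimpleGraph.fromRel (fun a b =>
    (b : ℕ) = (a : ℕ) + 1 ∨ ((a : ℕ) = 0 ∧ (b : ℕ) = n - 1))

/-- The binomial `g = x_1 y_n - x_n y_1`. -/
def gElt (K : Type) [Field K] {n : ℕ} (hn : 0 < n) : MvPolynomial (Fin n ⊕ Fin n) K :=
  xv K ⟨0, hn⟩ * yv K ⟨n - 1, by omega⟩ - xv K ⟨n - 1, by omega⟩ * yv K ⟨0, hn⟩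

/-- The `i`-th generator `x_2 x_3 ⋯ x_i y_{i+1} ⋯ y_{n-1}` (for `i = 1, …, n-1`)
of the monomial ideal `M`; the product ranges over the labels `p = 2, …, n-1`
(`0`-indexed: `q = p - 1` with `1 ≤ q ≤ n-2`), taking `x_p` when `p ≤ i` and
`y_p` when `p > i`. -/
def mgen (K : Type) [Field K] (n : ℕ) (i : ℕ) : MvPolynomial (Fin n ⊕ Fin n) K :=
  ∏ q ∈ Finset.univ.filter (fun q : Fin n => 0 < (q : ℕ) ∧ (q : ℕ) < n - 1),
    (if (q : ℕ) + 1 ≤ i then xv K q else yv K q)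

/-- The monomial ideal
`M = (x_2 x_3 ⋯ x_{n-1}, x_2 x_3 ⋯ x_{n-2} y_{n-1}, …, x_2 y_3 ⋯ y_{n-1}, y_2 y_3 ⋯ y_{n-1})`. -/
def monoM (K : Type) [Field K] (n : ℕ) : Ideal (MvPolynomial (Fin n ⊕ Fin n) K) :=
  Ideal.span {f | ∃ i : ℕ, 1 ≤ i ∧ i ≤ n - 1 ∧ f = mgen K n i}

/-- The degree of a vertex, as the cardinality of its neighbor set. -/
def deg {n : ℕ} (G : SimpleGraph (Fin n)) (v : Fin n) : ℕ :=
  Nat.card (G.neighborSet v)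

/-- A tree is 3-star like if no vertex has degree `≥ 4`, and either there is at most
one vertex of degree `3`, or there are exactly two vertices of degree `3` and they
are joined by an edge. -/
def ThreeStarLike {n : ℕ} (G : SimpleGraph (Fin n)) : Prop :=
  (∀ v, deg G v ≤ 3) ∧
    ({v | deg G v = 3}.Subsingleton ∨
      ∃ a b : Fin n, a ≠ b ∧ G.Adj a b ∧ {v | deg G v = 3} = {a, b})

/-- The graph `G′` on `[n+1]` obtained from a graph `G` on `[n]` by attaching the
new edge `{v, n+1}` at the vertex `v` of `G`. -/
def extendG {n : ℕ} (G : SimpleGraph (Fin n)) (v : Fin n) : SimpleGraph (Fin (n + 1)) :=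
  SimpleGraph.fromRel (fun a b =>
    (∃ (ha : a ≠ Fin.last n) (hb : b ≠ Fin.last n),
      G.Adj (a.castPred ha) (b.castPred hb)) ∨
    (a = Fin.castSucc v ∧ b = Fin.last n))

/-- The inclusion `S = K[x_1,…,x_n,y_1,…,y_n] → S′ = K[x_1,…,x_{n+1},y_1,…,y_{n+1}]`. -/
def liftS (K : Type) [Field K] (n : ℕ) :
    MvPolynomial (Fin n ⊕ Fin n) K →ₐ[K] MvPolynomial (Fin (n + 1) ⊕ Fin (n + 1)) K :=
  rename (Sum.map Fin.castSucc Fin.castSucc)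




/-! ### Depth of cyclic modules -/

open RingTheory.Sequence in
/-- `dep m k I`: there is a regular sequence of length `k` inside `m` on the cyclic module `R ⧸ I`,
where `I ≤ m`; it is set up by recursion on `k`, peeling off one element at a time. -/
def dep {R : Type} [CommRing R] (m : Ideal R) : ℕ → Ideal R → Prop
  | 0, I => I ≤ m
  | k + 1, I => ∃ r ∈ m, (∀ s, r * s ∈ I → s ∈ I) ∧ dep m k (I ⊔ Ideal.span {r})

section Depth

variable {R : Type} [CommRing R] {m : Ideal R}

lemma dep.le {k : ℕ} {I : Ideal R} (h : dep m k I) : I ≤ m := by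
  induction k generalizing I with
  | zero => exact h
  | succ k ih => obtain ⟨r, _, _, h⟩ := h; exact le_sup_left.trans (ih h)

lemma dep.pred {k : ℕ} {I : Ideal R} (h : dep m (k + 1) I) : dep m k I := by
  induction k generalizing I with
  | zero => exact h.le
  | succ k ih => obtain ⟨r, h1, h2, h⟩ := h; exact ⟨r, h1, h2, ih h⟩

lemma dep.mono {k l : ℕ} {I : Ideal R} (h : dep m k I) (hl : l ≤ k) : dep m l I := by
  induction k, hl using Nat.le_induction with
  | base => exact h
  | succ k _ ih => exact ih h.pred

/-- `(R ⧸ I) ⧸ r (R ⧸ I)` is the cyclic module `R ⧸ (I + (r))`. -/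
def quotSMulTopEquiv (I : Ideal R) (r : R) :
    QuotSMulTop r (R ⧸ I) ≃ₗ[R] R ⧸ (I ⊔ Ideal.span {r}) :=
  (Submodule.quotEquivOfEq _ _ (by
    rw [← Submodule.ideal_span_singleton_smul]
    ext x
    constructor
    · intro hx
      refine Submodule.smul_induction_on hx ?_ ?_
      · intro a ha n _
        obtain ⟨n, rfl⟩ := Submodule.mkQ_surjective _ n
        exact ⟨a * n, Ideal.mul_mem_right _ _ ha, rfl⟩
      · exact fun _ _ h1 h2 => Submodule.add_mem _ h1 h2
    · rintro ⟨y, hy, rfl⟩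
      have : (Submodule.mkQ I) y = y • (Submodule.mkQ I) 1 := by
        rw [← map_smul]; simp
      rw [this]
      exact Submodule.smul_mem_smul hy trivial)).trans
  (Submodule.quotientQuotientEquivQuotientSup I (Ideal.span {r}))

lemma isSMulRegular_quot_iff (I : Ideal R) (r : R) :
    IsSMulRegular (R ⧸ I) r ↔ ∀ s, r * s ∈ I → s ∈ I := by
  constructor
  · intro h s hs
    have := @h (Ideal.Quotient.mk I s) 0 (by
      show r • _ = r • _
      rw [smul_zero]
      show Ideal.Quotient.mk I (r * s) = 0
      exact Ideal.Quotient.eq_zero_iff_mem.2 hs)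
    exact Ideal.Quotient.eq_zero_iff_mem.1 this
  · intro h a b hab
    obtain ⟨a, rfl⟩ := Ideal.Quotient.mk_surjective a
    obtain ⟨b, rfl⟩ := Ideal.Quotient.mk_surjective b
    have hab : Ideal.Quotient.mk I (r * a) = Ideal.Quotient.mk I (r * b) := hab
    rw [Ideal.Quotient.eq] at hab ⊢
    exact h _ (by rwa [mul_sub])

open RingTheory.Sequence in
lemma dep_iff_isRegular (hm : m ≠ ⊤) {k : ℕ} {I : Ideal R} (hI : I ≤ m) :
    dep m k I ↔ ∃ rs : List R, rs.length = k ∧ (∀ r ∈ rs, r ∈ m) ∧ IsRegular (R ⧸ I) rs := by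
  induction k generalizing I with
  | zero =>
    constructor
    · intro _
      have : Nontrivial (R ⧸ I) := Ideal.Quotient.nontrivial_iff.2 fun h => hm (top_le_iff.1 (h ▸ hI))
      exact ⟨[], rfl, by simp, IsRegular.nil _ _⟩
    · intro _; exact hI
  | succ k ih =>
    constructor
    · rintro ⟨r, hr, hreg, h⟩
      obtain ⟨rs, h1, h2, h3⟩ := (ih h.le).1 h
      refine ⟨r :: rs, by simp [h1], by simpa using ⟨hr, h2⟩, ?_⟩
      rw [isRegular_cons_iff]
      exact ⟨(isSMulRegular_quot_iff I r).2 hreg,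
        ((quotSMulTopEquiv I r).isRegular_congr rs).2 h3⟩
    · rintro ⟨rs, h1, h2, h3⟩
      match rs, h1 with
      | r :: rs, h1 =>
      rw [isRegular_cons_iff] at h3
      have hr : r ∈ m := h2 r (by simp)
      have hI' : I ⊔ Ideal.span {r} ≤ m := sup_le hI (by simpa [Ideal.span_le] using hr)
      exact ⟨r, hr, (isSMulRegular_quot_iff I r).1 h3.1, (ih hI').2 ⟨rs, by simpa using h1,
        fun x hx => h2 x (by simp [hx]), ((quotSMulTopEquiv I r).isRegular_congr rs).1 h3.2⟩⟩

/-- Rees' theorem for cyclic modules. -/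
lemma dep_iff_ext [IsNoetherianRing R] (hm : m ≠ ⊤) {k : ℕ} {I : Ideal R} (hI : I ≤ m) :
    dep m k I ↔ ∀ i < k, Subsingleton
      (Abelian.Ext (ModuleCat.of R (R ⧸ m)) (ModuleCat.of R (R ⧸ I)) i) := by
  have hlt : m • (⊤ : Submodule R (ModuleCat.of R (R ⧸ I))) < ⊤ := by
    rw [lt_top_iff_ne_top]
    intro h
    apply hm
    rw [Ideal.eq_top_iff_one]
    have h1 : (Ideal.Quotient.mk I 1 : R ⧸ I) ∈ m • (⊤ : Submodule R (R ⧸ I)) := by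
      have : m • (⊤ : Submodule R (R ⧸ I)) = ⊤ := h
      rw [this]; trivial
    have h2 : m • (⊤ : Submodule R (R ⧸ I)) ≤ Submodule.map (Submodule.mkQ I) m := by
      rw [Submodule.smul_le]
      intro r hr n _
      obtain ⟨n, rfl⟩ := Submodule.mkQ_surjective _ n
      exact ⟨r * n, Ideal.mul_mem_right _ _ hr, rfl⟩
    obtain ⟨y, hy, hy1⟩ := h2 h1
    have : y - 1 ∈ I := Ideal.Quotient.eq.1 hy1
    have := m.sub_mem hy (hI this)
    simpa using this
  have hs : Module.support R (R ⧸ m) = PrimeSpectrum.zeroLocus m := by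
    rw [Module.support_eq_zeroLocus, Ideal.annihilator_quotient]
  rw [dep_iff_isRegular hm hI]
  constructor
  · rintro ⟨rs, h1, h2, h3⟩
    rw [← h1]
    exact ModuleCat.subsingleton_ext_of_exists_isRegular m (ModuleCat.of R (R ⧸ m)) hs.le
      (ModuleCat.of R (R ⧸ I)) hlt rs h2 h3
  · exact ModuleCat.exists_isRegular_of_exists_subsingleton_ext m k (ModuleCat.of R (R ⧸ I)) hlt
      (ModuleCat.of R (R ⧸ m)) hs

end Depth


/-! ### Depth along short exact sequences -/

section DepthSeq

variable {R : Type} [CommRing R] {m : Ideal R}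

/-- The short complex `0 → R ⧸ A → R ⧸ B → R ⧸ (B + (f)) → 0` with `A = B : f`, whose first map
is multiplication by `f`. -/
def colonComplex (A B : Ideal R) (f : R) (h : ∀ s, f * s ∈ B ↔ s ∈ A) :
    ShortComplex (ModuleCat.{0} R) :=
  ShortComplex.mk
    (ModuleCat.ofHom (Submodule.mapQ A B (LinearMap.mulLeft R f) fun s hs => (h s).2 hs))
    (ModuleCat.ofHom (Submodule.factor (le_sup_left : B ≤ B ⊔ Ideal.span {f})))
    (by
      refine ModuleCat.hom_ext (LinearMap.ext fun x => ?_)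
      obtain ⟨x, rfl⟩ := Submodule.mkQ_surjective _ x
      show Submodule.Quotient.mk (f * x) = 0
      rw [Submodule.Quotient.mk_eq_zero]
      exact Ideal.mul_mem_right _ _ (Ideal.mem_sup_right (Ideal.mem_span_singleton_self f)))

lemma colonComplex_shortExact (A B : Ideal R) (f : R) (h : ∀ s, f * s ∈ B ↔ s ∈ A) :
    (colonComplex A B f h).ShortExact where
  exact := by
    rw [ShortComplex.moduleCat_exact_iff]
    intro x hx
    obtain ⟨x, rfl⟩ := Submodule.mkQ_surjective _ x
    have hx : (Submodule.Quotient.mk x : R ⧸ (B ⊔ Ideal.span {f})) = 0 := hx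
    rw [Submodule.Quotient.mk_eq_zero] at hx
    obtain ⟨b, hb, c, hc, rfl⟩ := Submodule.mem_sup.1 hx
    obtain ⟨c, rfl⟩ := Ideal.mem_span_singleton.1 hc
    refine ⟨Submodule.mkQ A c, ?_⟩
    show (Submodule.Quotient.mk (f * c) : R ⧸ B) = Submodule.Quotient.mk (b + f * c)
    rw [Submodule.Quotient.eq]
    simpa using hb
  mono_f := by
    rw [ModuleCat.mono_iff_injective]
    rw [injective_iff_map_eq_zero]
    intro x hx
    obtain ⟨x, rfl⟩ := Submodule.mkQ_surjective _ x
    have hx : (Submodule.Quotient.mk (f * x) : R ⧸ B) = 0 := hx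
    rw [Submodule.Quotient.mk_eq_zero] at hx
    exact (Submodule.Quotient.mk_eq_zero _).2 ((h x).1 hx)
  epi_g := by
    rw [ModuleCat.epi_iff_surjective]
    exact Submodule.factor_surjective (le_sup_left : B ≤ B ⊔ Ideal.span {f})

open Abelian in
/-- Depth estimate for the third term of `0 → R ⧸ A → R ⧸ B → R ⧸ (B + (f)) → 0`. -/
lemma dep_colon_right [IsNoetherianRing R] (hm : m ≠ ⊤) {A B : Ideal R} {f : R} (hf : f ∈ m)
    (h : ∀ s, f * s ∈ B ↔ s ∈ A) {k : ℕ} (hA : dep m (k + 1) A) (hB : dep m k B) :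
    dep m k (B ⊔ Ideal.span {f}) := by
  have hC : B ⊔ Ideal.span {f} ≤ m := sup_le hB.le (by simpa [Ideal.span_le] using hf)
  rw [dep_iff_ext hm hA.le] at hA
  rw [dep_iff_ext hm hB.le] at hB
  rw [dep_iff_ext hm hC]
  have hS := colonComplex_shortExact A B f h
  intro i hi
  refine subsingleton_of_forall_eq 0 fun x => ?_
  have h1 := hA (i + 1) (by omega)
  have h2 := hB i hi
  obtain ⟨y, rfl⟩ := Ext.covariant_sequence_exact₃ (ModuleCat.of R (R ⧸ m)) hS
    (n₀ := i) (n₁ := i + 1) x rfl (h1.elim _ _)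
  rw [show y = 0 from h2.elim _ _, Ext.zero_comp]; rfl

open Abelian in
/-- Depth estimate for the middle term of `0 → R ⧸ A → R ⧸ B → R ⧸ (B + (f)) → 0`. -/
lemma dep_colon_mid [IsNoetherianRing R] (hm : m ≠ ⊤) {A B : Ideal R} {f : R}
    (h : ∀ s, f * s ∈ B ↔ s ∈ A) {k : ℕ} (hA : dep m k A) (hC : dep m k (B ⊔ Ideal.span {f})) :
    dep m k B := by
  rw [dep_iff_ext hm hA.le] at hA
  have hB := le_sup_left.trans hC.le
  rw [dep_iff_ext hm hC.le] at hC
  rw [dep_iff_ext hm hB]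
  have hS := colonComplex_shortExact A B f h
  intro i hi
  refine subsingleton_of_forall_eq 0 fun x => ?_
  have h1 := hA i hi
  have h2 := hC i hi
  obtain ⟨y, rfl⟩ := Ext.covariant_sequence_exact₂ (ModuleCat.of R (R ⧸ m)) hS
    (n := i) x (h2.elim _ _)
  rw [show y = 0 from h1.elim _ _, Ext.zero_comp]; rfl

open Abelian in
/-- Depth estimate for the first term of `0 → R ⧸ A → R ⧸ B → R ⧸ (B + (f)) → 0`. -/
lemma dep_colon_left [IsNoetherianRing R] (hm : m ≠ ⊤) {A B : Ideal R} {f : R}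
    (h : ∀ s, f * s ∈ B ↔ s ∈ A) {k : ℕ} (hA : A ≤ m) (hB : dep m (k + 1) B)
    (hC : dep m k (B ⊔ Ideal.span {f})) :
    dep m (k + 1) A := by
  rw [dep_iff_ext hm hB.le] at hB
  rw [dep_iff_ext hm hC.le] at hC
  rw [dep_iff_ext hm hA]
  have hS := colonComplex_shortExact A B f h
  intro i hi
  refine subsingleton_of_forall_eq 0 fun x => ?_
  have h2 := hB i hi
  match i, hi with
  | 0, hi =>
    have := hS.mono_f
    exact Ext.postcomp_mk₀_injective_of_mono (ModuleCat.of R (R ⧸ m)) (colonComplex A B f h).f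
      (h2.elim _ _)
  | i + 1, hi =>
    have h1 := hC i (by omega)
    obtain ⟨y, rfl⟩ := Ext.covariant_sequence_exact₁ (ModuleCat.of R (R ⧸ m)) hS
      (n₁ := i + 1) x (h2.elim _ _) (n₀ := i) rfl
    rw [show y = 0 from h1.elim _ _, Ext.zero_comp]; rfl

/-- Dividing out a regular element lowers the depth by exactly one. -/
lemma dep_sup_span_iff [IsNoetherianRing R] (hm : m ≠ ⊤) {I : Ideal R} {f : R} (hf : f ∈ m)
    (h : ∀ s, f * s ∈ I → s ∈ I) {k : ℕ} :
    dep m k (I ⊔ Ideal.span {f}) ↔ dep m (k + 1) I :=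
  ⟨fun H => ⟨f, hf, h, H⟩, fun H => dep_colon_right hm hf
    (fun s => ⟨h s, fun hs => Ideal.mul_mem_left _ _ hs⟩) H H.pred⟩

end DepthSeq


/-! ### Dimension of quotients -/

/-- The Krull dimension of `R ⧸ I` as a natural number; it is meaningful when `I` is proper and
`R` has finite dimension, and takes a junk value otherwise. -/
def pdim {R : Type} [CommRing R] (I : Ideal R) : ℕ := ((ringKrullDim (R ⧸ I)).unbotD 0).toNat

section Dim

variable {R : Type} [CommRing R]

lemma pdim_coe [FiniteRingKrullDim R] {I : Ideal R} (hI : I ≠ ⊤) :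
    ((pdim I : ℕ) : WithBot ℕ∞) = ringKrullDim (R ⧸ I) := by
  have h1 : Nontrivial (R ⧸ I) := Ideal.Quotient.nontrivial_iff.2 hI
  have h2 : ringKrullDim (R ⧸ I) ≠ ⊤ := fun h => by
    have := ringKrullDim_quotient_le I
    rw [h, top_le_iff] at this
    exact ringKrullDim_ne_top this
  have h3 : ringKrullDim (R ⧸ I) ≠ ⊥ := fun h => by
    have := ringKrullDim_nonneg_of_nontrivial (R := R ⧸ I)
    rw [h] at this
    simp at this
  unfold pdim
  obtain ⟨e, he⟩ := WithBot.ne_bot_iff_exists.1 h3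
  rw [← he] at h2 ⊢
  have h4 : e ≠ ⊤ := fun h => h2 (by rw [h]; rfl)
  obtain ⟨k, rfl⟩ := ENat.ne_top_iff_exists.1 h4
  rfl

lemma pdim_anti [FiniteRingKrullDim R] {I J : Ideal R} (h : I ≤ J) (hJ : J ≠ ⊤) :
    pdim J ≤ pdim I := by
  have hI : I ≠ ⊤ := fun e => hJ (top_le_iff.1 (e ▸ h))
  have := ringKrullDim_le_of_surjective (Ideal.Quotient.factor h) (Ideal.Quotient.factor_surjective h)
  rw [← pdim_coe hI, ← pdim_coe hJ] at this
  exact_mod_cast this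

lemma pdim_lt [FiniteRingKrullDim R] {P J : Ideal R} [hP : P.IsPrime] (h : P < J) (hJ : J ≠ ⊤) :
    pdim J + 1 ≤ pdim P := by
  obtain ⟨x, hx, hxP⟩ := SetLike.exists_of_lt h
  have := ringKrullDim_succ_le_of_surjective (Ideal.Quotient.factor h.le)
    (Ideal.Quotient.factor_surjective h.le) (r := Ideal.Quotient.mk P x)
    (mem_nonZeroDivisors_of_ne_zero (by rwa [Ne, Ideal.Quotient.eq_zero_iff_mem]))
    (by rw [Ideal.Quotient.factor_mk]; exact Ideal.Quotient.eq_zero_iff_mem.2 hx)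
  rw [← pdim_coe hP.ne_top, ← pdim_coe hJ] at this
  exact_mod_cast this

lemma exists_minimalPrime_pdim [FiniteRingKrullDim R] {I : Ideal R} (hI : I ≠ ⊤) :
    ∃ P ∈ I.minimalPrimes, pdim P = pdim I := by
  have h := pdim_coe hI
  rw [ringKrullDim_quotient] at h
  obtain ⟨l, hl⟩ := Order.le_krullDim_iff.1 h.le
  set Q := l.head.1 with hQ
  have hIQ : I ≤ Q.asIdeal := l.head.2
  have key : ((pdim I : ℕ) : WithBot ℕ∞) ≤ ringKrullDim (R ⧸ Q.asIdeal) := by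
    rw [ringKrullDim_quotient]
    refine Order.le_krullDim_iff.2 ⟨⟨l.length, fun i => ⟨(l i).1, ?_⟩, fun i => ?_⟩, hl⟩
    · exact LTSeries.head_le l i
    · exact l.step i
  rw [← pdim_coe Q.2.ne_top] at key
  have key : pdim I ≤ pdim Q.asIdeal := by exact_mod_cast key
  obtain ⟨P, hP, hPQ⟩ := Ideal.exists_minimalPrimes_le hIQ
  exact ⟨P, hP, le_antisymm (pdim_anti hP.1.2 hP.1.1.ne_top)
    (key.trans (pdim_anti hPQ Q.2.ne_top))⟩

lemma pdim_comap {T : Type} [CommRing T] (f : R →+* T) (hf : Function.Surjective f) (I : Ideal T) :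
    pdim (I.comap f) = pdim I := by
  unfold pdim
  rw [ringKrullDim_eq_of_ringEquiv (RingEquiv.ofBijective
    (Ideal.quotientMap I f le_rfl) ⟨Ideal.quotientMap_injective,
      Ideal.quotientMap_surjective hf⟩)]

instance finiteRingKrullDim_mvPolynomial (K : Type) [Field K] (σ : Type) [Finite σ] :
    FiniteRingKrullDim (MvPolynomial σ K) := by
  rw [finiteRingKrullDim_iff_ne_bot_and_top, MvPolynomial.ringKrullDim_of_isNoetherianRing,
    ringKrullDim_eq_zero_of_field]
  constructor
  · simp
  · rw [zero_add]
    exact (WithBot.coe_lt_coe.2 (ENat.natCast_lt_top (Nat.card σ))).ne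

end Dim


/-! ### Homogeneous ideals and prime avoidance -/

section Hom

attribute [local instance] MvPolynomial.gradedAlgebra

variable {K : Type} [Field K] {σ : Type}

/-- A homogeneous ideal of a polynomial ring: it contains the homogeneous components of its
elements. -/
def HI (I : Ideal (MvPolynomial σ K)) : Prop :=
  ∀ f ∈ I, ∀ n, homogeneousComponent n f ∈ I

lemma decompose_eq (f : MvPolynomial σ K) (n : ℕ) :
    (DirectSum.decompose (homogeneousSubmodule σ K) f n : MvPolynomial σ K) =
      homogeneousComponent n f :=
  decomposition.decompose'_apply f n

lemma HI_iff {I : Ideal (MvPolynomial σ K)} :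
    HI I ↔ I.IsHomogeneous (homogeneousSubmodule σ K) := by
  constructor
  · intro h i f hf
    rw [decompose_eq]
    exact h f hf i
  · intro h f hf n
    exact homogeneousComponent_mem_of_mem h hf n

lemma HI.sup {I J : Ideal (MvPolynomial σ K)} (hI : HI I) (hJ : HI J) : HI (I ⊔ J) :=
  HI_iff.2 (Ideal.IsHomogeneous.sup (HI_iff.1 hI) (HI_iff.1 hJ))

lemma HI_span {s : Set (MvPolynomial σ K)} (h : ∀ f ∈ s, ∃ d, f.IsHomogeneous d) :
    HI (Ideal.span s) :=
  HI_iff.2 (Ideal.homogeneous_span _ _ fun f hf => by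
    obtain ⟨d, hd⟩ := h f hf
    exact ⟨d, hd⟩)

lemma HI_span_singleton {f : MvPolynomial σ K} {d : ℕ} (h : f.IsHomogeneous d) :
    HI (Ideal.span {f}) := HI_span fun g hg => ⟨d, by rw [Set.mem_singleton_iff.1 hg]; exact h⟩

lemma HI_sInf {s : Set (Ideal (MvPolynomial σ K))} (h : ∀ I ∈ s, HI I) : HI (sInf s) := by
  intro f hf n
  rw [Submodule.mem_sInf] at hf ⊢
  exact fun I hI => h I hI f (hf I hI) n

lemma HI.mem_iff {I : Ideal (MvPolynomial σ K)} (hI : HI I) (f : MvPolynomial σ K) :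
    f ∈ I ↔ ∀ n, homogeneousComponent n f ∈ I :=
  mem_iff_homogeneousComponent_mem (HI_iff.1 hI) f

lemma HI.exists_of_not_le {I J : Ideal (MvPolynomial σ K)} (hI : HI I) (h : ¬ I ≤ J) :
    ∃ d f, f.IsHomogeneous d ∧ f ∈ I ∧ f ∉ J := by
  by_contra hc
  push Not at hc
  refine h fun f hf => ?_
  rw [← sum_homogeneousComponent f]
  exact J.sum_mem fun i _ => hc i _ (homogeneousComponent_isHomogeneous i f) (hI f hf i)

lemma component_mul_add {x y : MvPolynomial σ K} {e : ℕ} (hx : x.IsHomogeneous e) (n : ℕ) :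
    homogeneousComponent (e + n) (x * y) = x * homogeneousComponent n y := by
  rw [← decompose_eq, ← decompose_eq]
  exact DirectSum.coe_decompose_mul_add_of_left_mem (homogeneousSubmodule σ K) hx

lemma component_mul_lt {x y : MvPolynomial σ K} {e n : ℕ} (hx : x.IsHomogeneous e) (h : n < e) :
    homogeneousComponent n (x * y) = 0 := by
  rw [← decompose_eq]
  exact DirectSum.coe_decompose_mul_of_left_mem_of_not_le (homogeneousSubmodule σ K) hx
    (not_le.2 h)

/-- Membership in the irrelevant ideal means vanishing of the constant term. -/
lemma mem_mIdeal_iff (f : MvPolynomial σ K) : f ∈ mIdeal K σ ↔ constantCoeff f = 0 := by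
  rw [mIdeal, ← Set.image_univ, mem_ideal_span_X_image, constantCoeff_eq]
  constructor
  · intro h
    by_contra hc
    obtain ⟨i, -, hi⟩ := h 0 (mem_support_iff.2 hc)
    exact hi rfl
  · intro h s hs
    by_contra hc
    push Not at hc
    have : s = 0 := Finsupp.ext fun i => hc i (Set.mem_univ i)
    exact mem_support_iff.1 hs (this ▸ h)

lemma mIdeal_ne_top : mIdeal K σ ≠ ⊤ := by
  rw [Ideal.ne_top_iff_one, mem_mIdeal_iff]
  simp

lemma mem_mIdeal_of_homogeneous {f : MvPolynomial σ K} {d : ℕ} (h : f.IsHomogeneous d)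
    (hd : 0 < d) : f ∈ mIdeal K σ := by
  rw [mem_mIdeal_iff]
  exact h.coeff_eq_zero (by simpa using hd.ne)

lemma HI_mIdeal : HI (mIdeal K σ) := HI_span fun f hf => by
  obtain ⟨i, rfl⟩ := hf
  exact ⟨1, isHomogeneous_X K i⟩

lemma HI.le_mIdeal {I : Ideal (MvPolynomial σ K)} (hI : HI I) (h : I ≠ ⊤) : I ≤ mIdeal K σ := by
  intro f hf
  rw [mem_mIdeal_iff]
  by_contra hc
  have := hI f hf 0
  rw [homogeneousComponent_zero] at this
  exact h (Ideal.eq_top_of_isUnit_mem _ this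
    ((isUnit_iff_ne_zero.2 hc).map (C : K →+* MvPolynomial σ K)))

lemma exists_pos_degree {f : MvPolynomial σ K} {d : ℕ} (h : f.IsHomogeneous d)
    (hf : f ∈ mIdeal K σ) : ∃ d', 0 < d' ∧ f.IsHomogeneous d' := by
  rcases Nat.eq_zero_or_pos d with rfl | hd
  · refine ⟨1, one_pos, ?_⟩
    have h1 : f = C (coeff 0 f) := by
      rw [← homogeneousComponent_zero]
      exact (homogeneousComponent_eq_self h).symm
    have h2 : coeff 0 f = 0 := (mem_mIdeal_iff f).1 hf
    rw [h1, h2, map_zero]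
    exact isHomogeneous_zero _ _ _
  · exact ⟨d, hd, h⟩

/-- Homogeneous prime avoidance for homogeneous primes. -/
lemma homogeneous_avoidance_aux (n : ℕ) (s : Finset (Ideal (MvPolynomial σ K))) (hn : s.card = n)
    (hs : ∀ P ∈ s, P.IsPrime ∧ HI P) {I : Ideal (MvPolynomial σ K)} (hI : HI I)
    (hm : I ≤ mIdeal K σ) (h : ∀ P ∈ s, ¬ I ≤ P) :
    ∃ d f, 0 < d ∧ f.IsHomogeneous d ∧ f ∈ I ∧ ∀ P ∈ s, f ∉ P := by
  classical
  induction n generalizing s with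
  | zero =>
    rw [Finset.card_eq_zero] at hn
    subst hn
    exact ⟨1, 0, one_pos, isHomogeneous_zero _ _ _, I.zero_mem, by simp⟩
  | succ n ih =>
    have hne : s.Nonempty := Finset.card_pos.1 (by omega)
    obtain ⟨P, hPmin⟩ := s.exists_minimal hne
    have hPs := hPmin.prop
    obtain ⟨d, f, hd, hfd, hfI, hf⟩ := ih (s.erase P) (by rw [Finset.card_erase_of_mem hPs]; omega)
      (fun Q hQ => hs Q (Finset.mem_of_mem_erase hQ)) (fun Q hQ => h Q (Finset.mem_of_mem_erase hQ))
    by_cases hfP : f ∈ P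
    swap
    · refine ⟨d, f, hd, hfd, hfI, fun Q hQ => ?_⟩
      by_cases hQP : Q = P
      · rwa [hQP]
      · exact hf Q (Finset.mem_erase.2 ⟨hQP, hQ⟩)
    have hPp := (hs P hPs).1
    set L := I ⊓ (s.erase P).inf id with hL
    have hLP : ¬ L ≤ P := by
      intro hLP
      rcases hPp.inf_le.1 hLP with h1 | h1
      · exact h P hPs h1
      · obtain ⟨Q, hQ, hQP⟩ := (hPp.inf_le').1 h1
        have := hPmin.le_of_le (Finset.mem_of_mem_erase hQ) hQP
        exact (Finset.mem_erase.1 hQ).1 (le_antisymm hQP this)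
    have hLH : HI L := by
      intro g hg n
      refine ⟨hI g hg.1 n, ?_⟩
      have h2 : g ∈ (s.erase P).inf id := hg.2
      show _ ∈ (s.erase P).inf id
      rw [Submodule.mem_finsetInf] at h2 ⊢
      exact fun Q hQ => (hs Q (Finset.mem_of_mem_erase hQ)).2 g (h2 Q hQ) n
    obtain ⟨e, g, hge, hgL, hgP⟩ := hLH.exists_of_not_le hLP
    obtain ⟨e, he, hge⟩ := exists_pos_degree hge (hm hgL.1)
    refine ⟨d * e, f ^ e + g ^ d, Nat.mul_pos hd he, ?_, ?_, ?_⟩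
    · exact (hfd.pow e).add (by rw [mul_comm]; exact hge.pow d)
    · exact I.add_mem (I.pow_mem_of_mem hfI e he) (I.pow_mem_of_mem hgL.1 d hd)
    · intro Q hQ hmem
      by_cases hQP : Q = P
      · subst hQP
        exact hgP (hPp.mem_of_pow_mem d ((Ideal.add_mem_iff_right _
          (Ideal.pow_mem_of_mem _ hfP e he)).1 hmem))
      · have hQ' : Q ∈ s.erase P := Finset.mem_erase.2 ⟨hQP, hQ⟩
        have h2 : g ∈ (s.erase P).inf id := hgL.2
        rw [Submodule.mem_finsetInf] at h2
        exact hf Q hQ' ((hs Q hQ).1.mem_of_pow_mem e ((Ideal.add_mem_iff_left _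
          (Ideal.pow_mem_of_mem _ (h2 Q hQ') d hd)).1 hmem))

/-- Homogeneous prime avoidance: a homogeneous ideal contained in none of finitely many primes has
a homogeneous element of positive degree outside all of them. -/
lemma homogeneous_avoidance {s : Set (Ideal (MvPolynomial σ K))} (hfin : s.Finite)
    (hs : ∀ P ∈ s, P.IsPrime) {I : Ideal (MvPolynomial σ K)} (hI : HI I)
    (hm : I ≤ mIdeal K σ) (h : ∀ P ∈ s, ¬ I ≤ P) :
    ∃ d f, 0 < d ∧ f.IsHomogeneous d ∧ f ∈ I ∧ ∀ P ∈ s, f ∉ P := by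
  classical
  let c : Ideal (MvPolynomial σ K) → Ideal (MvPolynomial σ K) := fun P =>
    (P.homogeneousCore (homogeneousSubmodule σ K)).toIdeal
  obtain ⟨d, f, hd, hfd, hfI, hf⟩ := homogeneous_avoidance_aux _ (hfin.toFinset.image c) rfl
    (by
      intro P hP
      obtain ⟨Q, hQ, rfl⟩ := Finset.mem_image.1 hP
      exact ⟨(hs Q (hfin.mem_toFinset.1 hQ)).homogeneousCore,
        HI_iff.2 (HomogeneousIdeal.isHomogeneous _)⟩) hI hm
    (by
      intro P hP
      obtain ⟨Q, hQ, rfl⟩ := Finset.mem_image.1 hP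
      exact fun hc => h Q (hfin.mem_toFinset.1 hQ) (hc.trans (Ideal.toIdeal_homogeneousCore_le _ _)))
  refine ⟨d, f, hd, hfd, hfI, fun P hP hfP => ?_⟩
  exact hf (c P) (Finset.mem_image_of_mem _ (hfin.mem_toFinset.2 hP))
    (Ideal.mem_homogeneousCore_of_homogeneous_of_mem ⟨d, hfd⟩ hfP)

end Hom


/-! ### Associated primes of homogeneous ideals -/

section Ass

attribute [local instance] MvPolynomial.gradedAlgebra

variable {K : Type} [Field K] {σ : Type}

/-- The ideal `I : z`. -/
def colonI {R : Type} [CommRing R] (I : Ideal R) (z : R) : Ideal R :=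
  Submodule.comap (LinearMap.mulRight R z) I

lemma mem_colonI {R : Type} [CommRing R] {I : Ideal R} {z s : R} : s ∈ colonI I z ↔ s * z ∈ I :=
  Iff.rfl

/-- The associated primes of a homogeneous ideal, described through homogeneous witnesses. -/
def hAss (I : Ideal (MvPolynomial σ K)) : Set (Ideal (MvPolynomial σ K)) :=
  {Q | Q.IsPrime ∧ ∃ d z, z.IsHomogeneous d ∧ Q = colonI I z}

lemma hAss_finite [Finite σ] (I : Ideal (MvPolynomial σ K)) : (hAss I).Finite := by
  refine (associatedPrimes.finite (MvPolynomial σ K) (MvPolynomial σ K ⧸ I)).subset ?_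
  rintro Q ⟨hQ, d, z, hz, rfl⟩
  refine (isAssociatedPrime_iff).2 ⟨hQ, Ideal.Quotient.mk I z, ?_⟩
  ext s
  rw [mem_colonI, Submodule.mem_colon_singleton, Submodule.mem_bot, ← Ideal.Quotient.eq_zero_iff_mem, map_mul]
  rfl

lemma HI_colonI {I : Ideal (MvPolynomial σ K)} (hI : HI I) {z : MvPolynomial σ K} {d : ℕ}
    (hz : z.IsHomogeneous d) : HI (colonI I z) := by
  intro f hf n
  rw [mem_colonI, mul_comm, ← component_mul_add hz, mul_comm z f]
  exact hI _ hf _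

lemma hAss_HI {I Q : Ideal (MvPolynomial σ K)} (hI : HI I) (hQ : Q ∈ hAss I) : HI Q := by
  obtain ⟨-, d, z, hz, rfl⟩ := hQ
  exact HI_colonI hI hz

lemma hAss_le {I Q : Ideal (MvPolynomial σ K)} (hQ : Q ∈ hAss I) : I ≤ Q := by
  obtain ⟨-, d, z, hz, rfl⟩ := hQ
  exact fun f hf => I.mul_mem_right _ hf

/-- If a homogeneous ideal `A` kills an element of `N` modulo `I`, then `A` lies in an associated
prime of `I` with a witness in `N`. -/
lemma exists_hAss [Finite σ] {I N A : Ideal (MvPolynomial σ K)} (hI : HI I) (hN : HI N) (hA : HI A)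
    {z : MvPolynomial σ K} (hzN : z ∈ N) (hzI : z ∉ I) (h : ∀ r ∈ A, r * z ∈ I) :
    ∃ Q ∈ hAss I, A ≤ Q ∧ ∃ z ∈ N, Q = colonI I z := by
  have h1 : ∃ n, homogeneousComponent n z ∉ I := by
    by_contra hc
    push Not at hc
    exact hzI ((hI.mem_iff z).2 hc)
  obtain ⟨n, hn⟩ := h1
  have h2 : A ≤ colonI I (homogeneousComponent n z) := by
    by_contra hc
    obtain ⟨e, r, hr, hrA, hrn⟩ := hA.exists_of_not_le hc
    apply hrn
    rw [mem_colonI, ← component_mul_add hr]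
    exact hI _ (h r hrA) _
  let T : Set (Ideal (MvPolynomial σ K)) :=
    {Q | ∃ d z, z.IsHomogeneous d ∧ z ∈ N ∧ z ∉ I ∧ A ≤ Q ∧ Q = colonI I z}
  have hT : T.Nonempty := ⟨_, n, _, homogeneousComponent_isHomogeneous n z, hN _ hzN n, hn, h2, rfl⟩
  obtain ⟨Q, ⟨d, w, hw, hwN, hwI, hAQ, hQ⟩, hmax⟩ :=
    (wellFounded_gt (α := Ideal (MvPolynomial σ K))).has_min T hT
  refine ⟨Q, ⟨?_, d, w, hw, hQ⟩, hAQ, w, hwN, hQ⟩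
  have hQH : HI Q := hQ ▸ HI_colonI hI hw
  refine (HI_iff.1 hQH).isPrime_of_homogeneous_mem_or_mem ?_ ?_
  · rw [Ideal.ne_top_iff_one, hQ, mem_colonI, one_mul]
    exact hwI
  · rintro x y ⟨dx, hx⟩ ⟨dy, hy⟩ hxy
    by_contra hc
    push Not at hc
    have hle : Q ≤ colonI I (y * w) := by
      intro s hs
      rw [hQ, mem_colonI] at hs
      rw [mem_colonI, mul_left_comm]
      exact I.mul_mem_left _ hs
    have hmem : colonI I (y * w) ∈ T := by
      refine ⟨dy + d, y * w, IsHomogeneous.mul hy hw, N.mul_mem_left _ hwN, ?_, hAQ.trans hle, rfl⟩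
      intro h3
      apply hc.2
      rw [hQ]
      exact h3
    have := hmax _ hmem
    apply this
    refine lt_of_le_of_ne hle fun heq => hc.1 ?_
    rw [heq, mem_colonI, ← mul_assoc]
    rw [hQ] at hxy
    exact hxy

lemma HI_top : HI (⊤ : Ideal (MvPolynomial σ K)) := fun _ _ _ => trivial

lemma HI_bot : HI (⊥ : Ideal (MvPolynomial σ K)) := by
  intro f hf n
  rw [Ideal.mem_bot] at hf
  rw [hf, map_zero]
  exact Ideal.zero_mem _

lemma hAss_nonempty [Finite σ] {I : Ideal (MvPolynomial σ K)} (hI : HI I) (h : I ≠ ⊤) :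
    (hAss I).Nonempty := by
  obtain ⟨Q, hQ, -⟩ := exists_hAss hI HI_top HI_bot (z := 1) trivial
    ((Ideal.ne_top_iff_one I).1 h) (by
      intro r hr
      rw [Ideal.mem_bot] at hr
      rw [hr, zero_mul]
      exact I.zero_mem)
  exact ⟨Q, hQ⟩

/-- Regular elements modulo `I` avoid all associated primes. -/
lemma not_mem_hAss {I Q : Ideal (MvPolynomial σ K)} (hQ : Q ∈ hAss I) {r : MvPolynomial σ K}
    (hr : ∀ s, r * s ∈ I → s ∈ I) : r ∉ Q := by
  obtain ⟨hp, d, z, hz, rfl⟩ := hQ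
  intro h
  apply hp.ne_top
  rw [Ideal.eq_top_iff_one, mem_colonI, one_mul]
  exact hr z h

/-- A homogeneous element avoiding all associated primes is regular. -/
lemma regular_of_not_mem_hAss [Finite σ] {I : Ideal (MvPolynomial σ K)} (hI : HI I)
    {r : MvPolynomial σ K} {d : ℕ} (hd : r.IsHomogeneous d) (h : ∀ Q ∈ hAss I, r ∉ Q) :
    ∀ s, r * s ∈ I → s ∈ I := by
  intro s hs
  by_contra hc
  obtain ⟨Q, hQ, hle, -⟩ := exists_hAss (A := Ideal.span {r}) hI HI_top (HI_span_singleton hd)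
    (z := s) trivial hc (by
      intro x hx
      obtain ⟨y, rfl⟩ := Ideal.mem_span_singleton'.1 hx
      rw [mul_assoc]
      exact I.mul_mem_left _ hs)
  exact h Q hQ (hle (Ideal.mem_span_singleton_self r))

/-- A homogeneous ideal contained in no associated prime of `I` contains a homogeneous element of
positive degree which is regular modulo `I`. -/
lemma exists_regular [Finite σ] {I A : Ideal (MvPolynomial σ K)} (hI : HI I) (hA : HI A)
    (hm : A ≤ mIdeal K σ) (h : ∀ Q ∈ hAss I, ¬ A ≤ Q) :
    ∃ d f, 0 < d ∧ f.IsHomogeneous d ∧ f ∈ A ∧ ∀ s, f * s ∈ I → s ∈ I := by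
  obtain ⟨d, f, hd, hfd, hfA, hf⟩ := homogeneous_avoidance (hAss_finite I) (fun P hP => hP.1) hA hm h
  exact ⟨d, f, hd, hfd, hfA, regular_of_not_mem_hAss hI hfd hf⟩

/-- The depth of `R/I` is at most the dimension of `R/Q` for every associated prime `Q` of `I`. -/
lemma dep_le_pdim_hAss [Finite σ] (k : ℕ) : ∀ {I Q : Ideal (MvPolynomial σ K)}, HI I → Q ∈ hAss I →
    dep (mIdeal K σ) k I → k ≤ pdim Q := by
  induction k with
  | zero => intros; exact Nat.zero_le _
  | succ k ih =>
    intro I Q hI hQ hdep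
    have hdep' := hdep
    obtain ⟨r, hrm, hr, -⟩ := hdep'
    obtain ⟨e, x, he, hxe, hxm, hx⟩ := exists_regular hI HI_mIdeal le_rfl
      (fun P hP hle => not_mem_hAss hP hr (hle hrm))
    have hk := (dep_sup_span_iff mIdeal_ne_top hxm hx).2 hdep
    have hQp := hQ.1
    have hQH := hAss_HI hI hQ
    have hxQ := not_mem_hAss hQ hx
    have hIx : HI (I ⊔ Ideal.span {x}) := hI.sup (HI_span_singleton hxe)
    -- a homogeneous element of minimal degree among those killed by `Q` modulo `I`
    have hex : ∃ d, ∃ z : MvPolynomial σ K, z.IsHomogeneous d ∧ z ∉ I ∧ ∀ q ∈ Q, q * z ∈ I := by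
      obtain ⟨hp, d, z, hz, hQz⟩ := hQ
      refine ⟨d, z, hz, fun h => hp.ne_top ?_, fun q hq => ?_⟩
      · rw [Ideal.eq_top_iff_one, hQz, mem_colonI, one_mul]
        exact h
      · rw [hQz] at hq
        exact hq
    classical
    obtain ⟨z, hz, hzI, hzQ⟩ := Nat.find_spec hex
    set d := Nat.find hex with hd
    have hzx : z ∉ I ⊔ Ideal.span {x} := by
      intro hmem
      obtain ⟨i, hi, y, hy, hiy⟩ := Submodule.mem_sup.1 hmem
      obtain ⟨w, rfl⟩ := Ideal.mem_span_singleton'.1 hy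
      have h1 : z = homogeneousComponent d i + homogeneousComponent d (x * w) := by
        rw [← map_add, mul_comm x w, hiy]
        exact (homogeneousComponent_eq_self hz).symm
      by_cases hde : d < e
      · rw [component_mul_lt hxe hde, add_zero] at h1
        exact hzI (h1 ▸ hI i hi d)
      · obtain ⟨n, hn⟩ := Nat.exists_eq_add_of_le (not_lt.1 hde)
        rw [hn, component_mul_add hxe] at h1
        refine Nat.find_min hex (m := n) (by omega) ⟨homogeneousComponent n w,
          homogeneousComponent_isHomogeneous n w, fun hw => hzI ?_, fun q hq => hx _ ?_⟩
        · rw [h1]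
          exact I.add_mem (hI i hi _) (I.mul_mem_left _ hw)
        · have h2 : x * (q * homogeneousComponent n w) =
              q * z - q * homogeneousComponent (e + n) i := by
            rw [h1]; ring
          rw [h2]
          exact I.sub_mem (hzQ q hq) (I.mul_mem_left _ (hI i hi _))
    obtain ⟨Q₁, hQ₁, hle, -⟩ := exists_hAss (A := Q ⊔ Ideal.span {x}) hIx HI_top
      (hQH.sup (HI_span_singleton hxe)) (z := z) trivial hzx (by
        intro r hr
        obtain ⟨q, hq, y, hy, rfl⟩ := Submodule.mem_sup.1 hr
        rw [add_mul]
        exact Ideal.add_mem _ (Ideal.mem_sup_left (hzQ q hq))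
          (Ideal.mem_sup_right (Ideal.mul_mem_right _ _ hy)))
    have hlt : Q < Q₁ := lt_of_le_of_ne (le_sup_left.trans hle) fun heq =>
      hxQ (heq ▸ hle (Ideal.mem_sup_right (Ideal.mem_span_singleton_self x)))
    have h3 := ih hIx hQ₁ hk
    have h4 := pdim_lt hlt hQ₁.1.ne_top
    omega

lemma dep.ne_top [Finite σ] {k : ℕ} {I : Ideal (MvPolynomial σ K)} (h : dep (mIdeal K σ) k I) :
    I ≠ ⊤ := fun hI => mIdeal_ne_top (top_le_iff.1 (hI ▸ h.le))

lemma dep_le_pdim [Finite σ] {k : ℕ} {I : Ideal (MvPolynomial σ K)} (hI : HI I)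
    (h : dep (mIdeal K σ) k I) : k ≤ pdim I := by
  obtain ⟨Q, hQ⟩ := hAss_nonempty hI h.ne_top
  exact (dep_le_pdim_hAss k hI hQ h).trans (pdim_anti (hAss_le hQ) hQ.1.ne_top)

lemma isCMQuot_iff [Finite σ] {I : Ideal (MvPolynomial σ K)} (hI : HI I) (htop : I ≠ ⊤) :
    IsCMQuot K I ↔ dep (mIdeal K σ) (pdim I) I := by
  classical
  have hIm := hI.le_mIdeal htop
  set k₀ := Nat.findGreatest (fun k => dep (mIdeal K σ) k I) (pdim I) with hk₀
  have hspec : dep (mIdeal K σ) k₀ I :=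
    Nat.findGreatest_spec (P := fun k => dep (mIdeal K σ) k I) (Nat.zero_le _) hIm
  have hdepth : depth (mIdeal K σ) (MvPolynomial σ K ⧸ I) = (k₀ : ℕ∞) := by
    apply le_antisymm
    · refine sSup_le ?_
      rintro k ⟨rs, rfl, hrs, hreg⟩
      have h1 := (dep_iff_isRegular mIdeal_ne_top hIm).2 ⟨rs, rfl, hrs, hreg⟩
      exact_mod_cast Nat.le_findGreatest (dep_le_pdim hI h1) h1
    · refine le_sSup ?_
      obtain ⟨rs, hl, hrs, hreg⟩ := (dep_iff_isRegular mIdeal_ne_top hIm).1 hspec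
      exact ⟨rs, by rw [hl], hrs, hreg⟩
  rw [IsCMQuot, hdepth, ← pdim_coe htop]
  constructor
  · intro h
    have : k₀ = pdim I := by exact_mod_cast h
    rwa [← this]
  · intro h
    have h1 : k₀ = pdim I := le_antisymm (Nat.findGreatest_le _) (Nat.le_findGreatest le_rfl h)
    rw [h1]
    rfl

/-- Approximate Cohen-Macaulayness in terms of `dep` and `pdim`. -/
lemma isACM_iff [Finite σ] {J : Ideal (MvPolynomial σ K)} (hJ : HI J) (htop : J ≠ ⊤) :
    IsACM K J ↔ ∃ (e : ℕ) (f : MvPolynomial σ K), 0 < e ∧ f.IsHomogeneous e ∧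
      ∀ m : ℕ, 1 ≤ m → pdim (J ⊔ Ideal.span {f ^ m}) + 1 = pdim J ∧
        dep (mIdeal K σ) (pdim (J ⊔ Ideal.span {f ^ m})) (J ⊔ Ideal.span {f ^ m}) := by
  refine exists_congr fun e => exists_congr fun f => and_congr_right fun he =>
    and_congr_right fun hf => forall_congr' fun m => imp_congr_right fun hm => ?_
  have hfm : (f ^ m).IsHomogeneous (e * m) := hf.pow m
  have hH : HI (J ⊔ Ideal.span {f ^ m}) := hJ.sup (HI_span_singleton hfm)
  have hle : J ⊔ Ideal.span {f ^ m} ≤ mIdeal K σ :=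
    sup_le (hJ.le_mIdeal htop) ((Ideal.span_singleton_le_iff_mem _).2
      (mem_mIdeal_of_homogeneous hfm (Nat.mul_pos he hm)))
  have hne : J ⊔ Ideal.span {f ^ m} ≠ ⊤ := fun h => mIdeal_ne_top (top_le_iff.1 (h ▸ hle))
  rw [isCMQuot_iff hH hne, ← pdim_coe hne, ← pdim_coe htop, and_comm]
  refine and_congr_left fun _ => ?_
  norm_cast

end Ass


/-! ### A criterion for approximate Cohen-Macaulayness -/

section Crit

variable {K : Type} [Field K] {σ : Type}

/-- A radical ideal is the intersection of its minimal primes. -/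
lemma mem_of_forall_minimalPrimes {R : Type} [CommRing R] {J : Ideal R} (hJ : J.IsRadical) {s : R}
    (h : ∀ P ∈ J.minimalPrimes, s ∈ P) : s ∈ J := by
  rw [← hJ.radical, ← Ideal.sInf_minimalPrimes, Submodule.mem_sInf]
  exact h

/-- If finitely many primes intersect inside a prime `Q`, one of them lies in `Q`. -/
lemma exists_le_of_sInf_le {R : Type} [CommRing R] {s : Set (Ideal R)} (hs : s.Finite)
    {Q : Ideal R} [hQ : Q.IsPrime] (h : sInf s ≤ Q) : ∃ P ∈ s, P ≤ Q := by
  have h1 : hs.toFinset.inf id ≤ Q := by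
    refine le_trans (le_sInf fun P hP => ?_) h
    exact Finset.inf_le (f := id) (hs.mem_toFinset.2 hP)
  obtain ⟨P, hP, hle⟩ := hQ.inf_le'.1 h1
  exact ⟨P, hs.mem_toFinset.1 hP, hle⟩

/-- The localization of a reduced ring at a minimal prime is a field. -/
lemma exists_mul_mem_of_minimalPrime {R : Type} [CommRing R] [IsNoetherianRing R] {J P : Ideal R}
    (hJ : J.IsRadical) (hP : P ∈ J.minimalPrimes) {f : R} (hf : f ∈ P) :
    ∃ s, s ∉ P ∧ s * f ∈ J := by
  have := hP.1.1
  have h : ¬ sInf (J.minimalPrimes \ {P}) ≤ P := by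
    intro hle
    obtain ⟨Q, hQ, hQP⟩ := exists_le_of_sInf_le
      ((J.finite_minimalPrimes_of_isNoetherianRing R).subset Set.sdiff_subset) hle
    exact hQ.2 (le_antisymm hQP (hP.2 hQ.1.1 hQP))
  obtain ⟨s, hs, hsP⟩ := Set.not_subset.1 h
  refine ⟨s, hsP, mem_of_forall_minimalPrimes hJ fun Q hQ => ?_⟩
  by_cases hQP : Q = P
  · exact hQP ▸ P.mul_mem_left s hf
  · exact Q.mul_mem_right _ ((Submodule.mem_sInf.1 hs) Q ⟨hQ, hQP⟩)

lemma pdim_mIdeal_lt [Finite σ] {Q : Ideal (MvPolynomial σ K)} (hQ : Q ≠ ⊤) (h : mIdeal K σ ≤ Q) :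
    pdim Q = 0 := by
  have hmax : (mIdeal K σ).IsMaximal := by
    have : mIdeal K σ = RingHom.ker (constantCoeff : MvPolynomial σ K →+* K) := by
      ext f
      exact mem_mIdeal_iff f
    rw [this]
    exact RingHom.ker_isMaximal_of_surjective _ fun c => ⟨C c, constantCoeff_C _ _⟩
  have heq : mIdeal K σ = Q := hmax.eq_of_le hQ h
  have hQm : Q.IsMaximal := heq ▸ hmax
  have h1 := pdim_coe hQ
  let _ := Ideal.Quotient.field Q
  rw [ringKrullDim_eq_zero_of_field] at h1
  exact_mod_cast h1

/-- What approximate Cohen-Macaulayness of a reduced quotient says about the ideal `J : f`. -/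
lemma exists_of_isACM [Finite σ] {J : Ideal (MvPolynomial σ K)} (hJ : HI J) (htop : J ≠ ⊤)
    (hrad : J.IsRadical) (h : IsACM K J) :
    ∃ (e : ℕ) (f : MvPolynomial σ K), f.IsHomogeneous e ∧ 1 ≤ pdim J ∧
      dep (mIdeal K σ) (pdim J) (colonI J f) ∧ dep (mIdeal K σ) (pdim J - 1) J ∧
      ∀ P : Ideal (MvPolynomial σ K), P.IsPrime → J ≤ P → pdim J ≤ pdim P → f ∉ P := by
  obtain ⟨e, f, he, hf, h⟩ := (isACM_iff hJ htop).1 h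
  obtain ⟨hp1, hd1⟩ := h 1 le_rfl
  obtain ⟨hp2, hd2⟩ := h 2 one_le_two
  rw [pow_one] at hp1 hd1
  have hfm := mem_mIdeal_of_homogeneous hf he
  set d := pdim J with hd
  have e1 : pdim (J ⊔ Ideal.span {f}) = d - 1 := by omega
  have e2 : pdim (J ⊔ Ideal.span {f ^ 2}) = d - 1 := by omega
  rw [e1] at hd1
  rw [e2] at hd2
  have hfJ : f ∉ J := by
    intro hfJ
    rw [sup_eq_left.2 ((Ideal.span_singleton_le_iff_mem _).2 hfJ)] at hp1
    omega
  have hsq : ∀ s, f * (f * s) ∈ J → f * s ∈ J := by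
    intro s hs
    refine hrad ⟨2, ?_⟩
    have : (f * s) ^ 2 = f * (f * s) * s := by ring
    rw [this]
    exact J.mul_mem_right _ hs
  have hU : HI (colonI J f) := HI_colonI hJ hf
  have hUm : colonI J f ≤ mIdeal K σ := by
    refine hU.le_mIdeal ?_
    rw [Ideal.ne_top_iff_one, mem_colonI, one_mul]
    exact hfJ
  have hcol : ∀ s, f * s ∈ J ⊔ Ideal.span {f ^ 2} ↔ s ∈ colonI J f ⊔ Ideal.span {f} := by
    intro s
    constructor
    · intro hs
      obtain ⟨j, hj, y, hy, hs⟩ := Submodule.mem_sup.1 hs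
      obtain ⟨t, rfl⟩ := Ideal.mem_span_singleton'.1 hy
      have h1 : s = (s - t * f) + t * f := by ring
      rw [h1]
      refine Ideal.add_mem _ (Ideal.mem_sup_left ?_)
        (Ideal.mem_sup_right (Ideal.mem_span_singleton'.2 ⟨t, rfl⟩))
      rw [mem_colonI]
      have h2 : (s - t * f) * f = j := by linear_combination -hs
      rwa [h2]
    · intro hs
      obtain ⟨u, hu, y, hy, rfl⟩ := Submodule.mem_sup.1 hs
      obtain ⟨t, rfl⟩ := Ideal.mem_span_singleton'.1 hy
      have h1 : f * (u + t * f) = u * f + t * f ^ 2 := by ring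
      rw [h1]
      exact Ideal.add_mem _ (Ideal.mem_sup_left hu)
        (Ideal.mem_sup_right (Ideal.mem_span_singleton'.2 ⟨t, rfl⟩))
  have hsup : J ⊔ Ideal.span {f ^ 2} ⊔ Ideal.span {f} = J ⊔ Ideal.span {f} := by
    rw [sup_assoc, sup_eq_right.2 (Ideal.span_singleton_le_span_singleton.2
      (dvd_pow_self f two_ne_zero))]
  have hUf : dep (mIdeal K σ) (d - 1) (colonI J f ⊔ Ideal.span {f}) := by
    have hA : colonI J f ⊔ Ideal.span {f} ≤ mIdeal K σ :=
      sup_le hUm ((Ideal.span_singleton_le_iff_mem _).2 hfm)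
    rcases Nat.eq_zero_or_pos (d - 1) with h0 | h0
    · rw [h0]
      exact hA
    · obtain ⟨k, hk⟩ := Nat.exists_eq_add_of_lt h0
      rw [zero_add] at hk
      rw [hk] at hd1 hd2 ⊢
      exact dep_colon_left mIdeal_ne_top hcol hA hd2 (by rw [hsup]; exact hd1.mono (by omega))
  have hreg : ∀ s, f * s ∈ colonI J f → s ∈ colonI J f := by
    intro s hs
    rw [mem_colonI, mul_comm] at hs ⊢
    exact hsq s hs
  have hdU : dep (mIdeal K σ) d (colonI J f) := by
    have := (dep_sup_span_iff mIdeal_ne_top hfm hreg).1 hUf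
    rwa [Nat.sub_add_cancel (by omega)] at this
  refine ⟨e, f, hf, by omega, hdU, ?_, ?_⟩
  · exact dep_colon_mid mIdeal_ne_top (fun s => by rw [mem_colonI, mul_comm])
      (hdU.mono (by omega)) hd1
  · intro P hP hJP hdP hfP
    have := pdim_anti (sup_le hJP ((Ideal.span_singleton_le_iff_mem _).2 hfP)) hP.ne_top
    omega

/-- A sufficient condition for approximate Cohen-Macaulayness of a reduced quotient. -/
lemma isACM_of [Finite σ] {J U : Ideal (MvPolynomial σ K)} (hJ : HI J) (htop : J ≠ ⊤)
    (hrad : J.IsRadical) (hU : HI U) (hJU : J ≤ U) (hd : 1 ≤ pdim J)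
    (hdU : dep (mIdeal K σ) (pdim J) U) (hdJ : dep (mIdeal K σ) (pdim J - 1) J)
    (hP : ∀ P : Ideal (MvPolynomial σ K), P.IsPrime → J ≤ P → pdim J ≤ pdim P → U ≤ P) :
    IsACM K J := by
  rw [isACM_iff hJ htop]
  -- `A` is the ideal `J : U`
  let A : Ideal (MvPolynomial σ K) :=
    sInf {B | ∃ e u, IsHomogeneous u e ∧ u ∈ U ∧ B = colonI J u}
  have hA : HI A := HI_sInf (by
    rintro B ⟨e, u, hu, -, rfl⟩
    exact HI_colonI hJ hu)
  have hAm : ∀ f ∈ A, ∀ u ∈ U, u * f ∈ J := by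
    intro f hf u hu
    have h1 : U ≤ colonI J f := by
      by_contra hc
      obtain ⟨e, v, hv, hvU, hvf⟩ := hU.exists_of_not_le hc
      apply hvf
      have := (Submodule.mem_sInf.1 hf) _ ⟨e, v, hv, hvU, rfl⟩
      rw [mem_colonI, mul_comm] at this
      exact this
    exact h1 hu
  have hAQ : ∀ Q ∈ hAss U, ¬ A ⊓ mIdeal K σ ≤ Q := by
    intro Q hQ hle
    have hQp := hQ.1
    have hdQ := dep_le_pdim_hAss _ hU hQ hdU
    rcases hQp.inf_le.1 hle with h1 | h1
    · have h2 : sInf {P | P ∈ J.minimalPrimes ∧ ¬ U ≤ P} ≤ Q := by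
        refine le_trans (fun s hs => ?_) h1
        rw [Submodule.mem_sInf] at hs ⊢
        rintro B ⟨e, u, hu, huU, rfl⟩
        refine mem_of_forall_minimalPrimes hrad fun P hPm => ?_
        by_cases hUP : U ≤ P
        · exact P.mul_mem_left _ (hUP huU)
        · exact P.mul_mem_right _ (hs P ⟨hPm, hUP⟩)
      obtain ⟨P, ⟨hPm, hUP⟩, hPQ⟩ := exists_le_of_sInf_le
        ((J.finite_minimalPrimes_of_isNoetherianRing _).subset fun P h => h.1) h2
      exact hUP (hP P hPm.1.1 hPm.1.2 (hdQ.trans (pdim_anti hPQ hQp.ne_top)))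
    · have := pdim_mIdeal_lt hQp.ne_top h1
      omega
  obtain ⟨e, f, he, hfe, hfA, hreg⟩ := exists_regular hU (A := A ⊓ mIdeal K σ)
    (fun g hg n => ⟨hA g hg.1 n, HI_mIdeal g hg.2 n⟩) inf_le_right hAQ
  refine ⟨e, f, he, hfe, fun m hm => ?_⟩
  have hfm : f ^ m ∈ mIdeal K σ := Ideal.pow_mem_of_mem _ hfA.2 _ hm
  have hfU : ∀ s, f * s ∈ J ↔ s ∈ U := fun s =>
    ⟨fun h => hreg s (hJU h), fun h => by rw [mul_comm]; exact hAm f hfA.1 s h⟩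
  have hcol : ∀ s, f ^ m * s ∈ J ↔ s ∈ U := by
    intro s
    constructor
    · intro h
      have h1 : f * s ∈ J := hrad ⟨m, by
        rw [mul_pow]
        obtain ⟨k, rfl⟩ := Nat.exists_eq_add_of_le' hm
        rw [pow_succ s, mul_left_comm]
        exact J.mul_mem_left _ h⟩
      exact (hfU s).1 h1
    · intro h
      obtain ⟨k, rfl⟩ := Nat.exists_eq_add_of_le' hm
      rw [pow_succ, mul_assoc]
      exact J.mul_mem_left _ ((hfU s).2 h)
  have hdep : dep (mIdeal K σ) (pdim J - 1) (J ⊔ Ideal.span {f ^ m}) :=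
    dep_colon_right mIdeal_ne_top hfm hcol (by rwa [Nat.sub_add_cancel hd]) hdJ
  have hge := dep_le_pdim (hJ.sup (HI_span_singleton (hfe.pow m))) hdep
  have hle : pdim (J ⊔ Ideal.span {f ^ m}) + 1 ≤ pdim J := by
    obtain ⟨P, hPm, hPd⟩ := exists_minimalPrime_pdim hdep.ne_top
    have hPp := hPm.1.1
    have hJP : J ≤ P := le_sup_left.trans hPm.1.2
    have hfP : f ∈ P := hPp.mem_of_pow_mem m
      (hPm.1.2 (Ideal.mem_sup_right (Ideal.mem_span_singleton_self _)))
    obtain ⟨P₀, hP₀, hle⟩ := Ideal.exists_minimalPrimes_le hJP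
    have hP₀p := hP₀.1.1
    rw [← hPd]
    by_cases hf₀ : f ∈ P₀
    · by_contra hc
      obtain ⟨s, hs, hsf⟩ := exists_mul_mem_of_minimalPrime hrad hP₀ hf₀
      apply hs
      have h1 := pdim_anti hle hPp.ne_top
      exact hP P₀ hP₀p hP₀.1.2 (by omega) ((hfU s).1 (by rwa [mul_comm]))
    · have h1 := pdim_lt (lt_of_le_of_ne hle fun h => hf₀ (h ▸ hfP)) hPp.ne_top
      exact h1.trans (pdim_anti hP₀.1.2 hP₀p.ne_top)
  have heq : pdim (J ⊔ Ideal.span {f ^ m}) = pdim J - 1 := by omega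
  exact ⟨by omega, by rwa [heq]⟩

end Crit


/-! ### Binomial edge ideals and their minimal primes -/

section Graph

variable (K : Type) [Field K] {n : ℕ}

/-- The binomial `x_i y_j - x_j y_i`. -/
def bin {σ : Type} (i j : σ) : MvPolynomial (σ ⊕ σ) K := xv K i * yv K j - xv K j * yv K i

variable {K}

lemma bin_swap {σ : Type} (i j : σ) : bin K i j = -bin K j i := by
  simp only [bin]; ring

lemma bin_mem_bei {G : SimpleGraph (Fin n)} {i j : Fin n} (h : G.Adj i j) : bin K i j ∈ bei K G := by
  rcases lt_trichotomy i j with hij | rfl | hij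
  · exact Ideal.subset_span ⟨i, j, hij, h, rfl⟩
  · exact absurd h (G.irrefl)
  · rw [bin_swap, Ideal.neg_mem_iff]
    exact Ideal.subset_span ⟨j, i, hij, h.symm, rfl⟩

lemma bei_le_iff {G : SimpleGraph (Fin n)} {I : Ideal (MvPolynomial (Fin n ⊕ Fin n) K)} :
    bei K G ≤ I ↔ ∀ i j, G.Adj i j → bin K i j ∈ I := by
  constructor
  · exact fun h i j hij => h (bin_mem_bei hij)
  · intro h
    refine Ideal.span_le.2 ?_
    rintro f ⟨i, j, -, hij, rfl⟩
    exact h i j hij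

lemma bei_mono {G H : SimpleGraph (Fin n)} (h : ∀ i j, G.Adj i j → H.Adj i j) :
    bei K G ≤ bei K H := bei_le_iff.2 fun i j hij => bin_mem_bei (h i j hij)

variable (K) in
/-- The substitution `x_w = y_w = 0`. -/
def kill {σ : Type} [DecidableEq σ] (w : σ) : MvPolynomial (σ ⊕ σ) K →ₐ[K] MvPolynomial (σ ⊕ σ) K :=
  aeval (Sum.elim (fun i => if i = w then 0 else xv K i) (fun i => if i = w then 0 else yv K i))

lemma kill_xv {σ : Type} [DecidableEq σ] (w i : σ) :
    kill K w (xv K i) = if i = w then 0 else xv K i := by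
  simp [kill, xv]

lemma kill_yv {σ : Type} [DecidableEq σ] (w i : σ) :
    kill K w (yv K i) = if i = w then 0 else yv K i := by
  simp [kill, yv]

lemma kill_bin {σ : Type} [DecidableEq σ] (w i j : σ) :
    kill K w (bin K i j) = if i = w ∨ j = w then 0 else bin K i j := by
  simp only [bin, map_sub, map_mul, kill_xv, kill_yv]
  by_cases h1 : i = w <;> by_cases h2 : j = w <;> simp [h1, h2]

lemma kill_comm {σ : Type} [DecidableEq σ] (w u : σ) (f : MvPolynomial (σ ⊕ σ) K) :
    kill K w (kill K u f) = kill K u (kill K w f) := by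
  have : (kill K w).comp (kill K u) = (kill K u).comp (kill K w) := by
    apply MvPolynomial.algHom_ext
    rintro (i | i)
    · show kill K w (kill K u (xv K i)) = kill K u (kill K w (xv K i))
      simp only [kill_xv]
      split_ifs <;> simp [kill_xv, *]
    · show kill K w (kill K u (yv K i)) = kill K u (kill K w (yv K i))
      simp only [kill_yv]
      split_ifs <;> simp [kill_yv, *]
  exact DFunLike.congr_fun this f

lemma sub_kill_mem {σ : Type} [DecidableEq σ] (w : σ) (f : MvPolynomial (σ ⊕ σ) K) :
    f - kill K w f ∈ Ideal.span {xv K w, yv K w} := by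
  set I : Ideal (MvPolynomial (σ ⊕ σ) K) := Ideal.span {xv K w, yv K w} with hI
  have hx : xv K w ∈ I := Ideal.subset_span (by simp)
  have hy : yv K w ∈ I := Ideal.subset_span (by simp)
  have h : (Ideal.Quotient.mkₐ K I).comp (kill K w) = Ideal.Quotient.mkₐ K I := by
    apply MvPolynomial.algHom_ext
    rintro (i | i)
    · show Ideal.Quotient.mk I (kill K w (xv K i)) = Ideal.Quotient.mk I (xv K i)
      rw [kill_xv]
      split_ifs with h
      · rw [h, map_zero, eq_comm, Ideal.Quotient.eq_zero_iff_mem]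
        exact hx
      · rfl
    · show Ideal.Quotient.mk I (kill K w (yv K i)) = Ideal.Quotient.mk I (yv K i)
      rw [kill_yv]
      split_ifs with h
      · rw [h, map_zero, eq_comm, Ideal.Quotient.eq_zero_iff_mem]
        exact hy
      · rfl
  rw [← Ideal.Quotient.eq_zero_iff_mem, map_sub, sub_eq_zero]
  exact (DFunLike.congr_fun h f).symm

/-- A vertex is free if its neighbours are pairwise adjacent. -/
def IsFree (G : SimpleGraph (Fin n)) (v : Fin n) : Prop :=
  ∀ i j, G.Adj v i → G.Adj v j → i ≠ j → G.Adj i j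

/-- The properties shared by the minimal primes of a binomial edge ideal: they are prime, contain
`x_w` exactly when they contain `y_w`, are stable under setting `x_w = y_w = 0`, and contain no
variable of a free vertex. -/
structure Good (G : SimpleGraph (Fin n)) (P : Ideal (MvPolynomial (Fin n ⊕ Fin n) K)) : Prop where
  prime : P.IsPrime
  xy : ∀ w, xv K w ∈ P ↔ yv K w ∈ P
  kill : ∀ w, ∀ f ∈ P, kill K w f ∈ P
  free : ∀ v, IsFree G v → xv K v ∉ P

/-- The exponents visible to the toric parametrization `x_i ↦ s_i α_c`, `y_i ↦ s_i β_c`, where `c`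
is the component of `i`: the `s`-degrees, and for each vertex the `α`-degree of its component. -/
def expo (r : Fin n → Fin n → Prop) :
    ((Fin n ⊕ Fin n) →₀ ℕ) →+ ((Fin n → ℕ) × (Fin n → ℕ)) := by
  classical exact
  { toFun := fun m => (fun i => m (Sum.inl i) + m (Sum.inr i),
      fun i => ∑ j with r j i, m (Sum.inl j))
    map_zero' := by ext <;> simp
    map_add' := fun a b => by
      ext i
      · simp; ring
      · simp [Finset.sum_add_distrib] }

section Cluster

variable {G : SimpleGraph (Fin n)}

lemma expo_move (htr : ∀ i j k, G.Adj i j → G.Adj j k → i ≠ k → G.Adj i k) {i j : Fin n}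
    (hij : G.Adj i j) :
    expo (fun i j => i = j ∨ G.Adj i j) (Finsupp.single (Sum.inl i) 1 + Finsupp.single (Sum.inr j) 1) =
      expo (fun i j => i = j ∨ G.Adj i j)
        (Finsupp.single (Sum.inl j) 1 + Finsupp.single (Sum.inr i) 1) := by
  classical
  ext k
  · simp [expo, Finsupp.single_apply]; ring
  · have hiff : (i = k ∨ G.Adj i k) ↔ (j = k ∨ G.Adj j k) := by
      constructor
      · rintro (rfl | h)
        · exact Or.inr hij.symm
        · by_cases hjk : j = k
          · exact Or.inl hjk
          · exact Or.inr (htr _ _ _ hij.symm h hjk)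
      · rintro (rfl | h)
        · exact Or.inr hij
        · by_cases hjk : i = k
          · exact Or.inl hjk
          · exact Or.inr (htr _ _ _ hij h hjk)
    simp [expo, Finsupp.single_apply, Finset.sum_ite_eq, hiff]

/-- Straightening: monomials with the same visible exponents agree modulo the binomial edge ideal
of a disjoint union of complete graphs. -/
lemma straighten (htr : ∀ i j k, G.Adj i j → G.Adj j k → i ≠ k → G.Adj i k) (N : ℕ) :
    ∀ m m' : (Fin n ⊕ Fin n) →₀ ℕ, ∑ i, (m (Sum.inl i) - m' (Sum.inl i)) ≤ N →
      expo (fun i j => i = j ∨ G.Adj i j) m = expo (fun i j => i = j ∨ G.Adj i j) m' →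
      (monomial m 1 - monomial m' 1 : MvPolynomial (Fin n ⊕ Fin n) K) ∈ bei K G := by
  classical
  induction N with
  | zero =>
    intro m m' hN he
    have hle : ∀ i, m (Sum.inl i) ≤ m' (Sum.inl i) := by
      intro i
      have := (Finset.sum_eq_zero_iff.1 (Nat.le_zero.1 hN)) i (Finset.mem_univ i)
      omega
    have hx : ∀ i, m (Sum.inl i) = m' (Sum.inl i) := by
      intro i
      have h2 : ∑ j with (j = i ∨ G.Adj j i), m (Sum.inl j) =
          ∑ j with (j = i ∨ G.Adj j i), m' (Sum.inl j) := by
        have := congrFun (congrArg Prod.snd he) i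
        simpa [expo] using this
      exact (Finset.sum_eq_sum_iff_of_le (fun j _ => hle j)).1 h2 i (by simp)
    have hmm : m = m' := by
      ext k
      rcases k with i | i
      · exact hx i
      · have := congrFun (congrArg Prod.fst he) i
        have h1 : m (Sum.inl i) + m (Sum.inr i) = m' (Sum.inl i) + m' (Sum.inr i) := this
        have := hx i
        omega
    rw [hmm, sub_self]
    exact Ideal.zero_mem _
  | succ N ih =>
    intro m m' hN he
    by_cases hsmall : ∑ i, (m (Sum.inl i) - m' (Sum.inl i)) ≤ N
    · exact ih m m' hsmall he
    have hex : ∃ i, m' (Sum.inl i) < m (Sum.inl i) := by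
      by_contra hc
      push Not at hc
      apply hsmall
      rw [Finset.sum_eq_zero fun i _ => Nat.sub_eq_zero_of_le (hc i)]
      exact Nat.zero_le _
    obtain ⟨i, hi⟩ := hex
    have h2 : ∑ j with (j = i ∨ G.Adj j i), m (Sum.inl j) =
        ∑ j with (j = i ∨ G.Adj j i), m' (Sum.inl j) := by
      have := congrFun (congrArg Prod.snd he) i
      simpa [expo] using this
    have hexj : ∃ j, (j = i ∨ G.Adj j i) ∧ m (Sum.inl j) < m' (Sum.inl j) := by
      by_contra hc
      push Not at hc
      refine absurd h2.symm (ne_of_lt (Finset.sum_lt_sum (fun j hj => hc j ?_) ⟨i, by simp, hi⟩))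
      simpa using hj
    obtain ⟨j, hji, hj⟩ := hexj
    have hne : j ≠ i := by rintro rfl; omega
    have hadj : G.Adj j i := hji.resolve_left hne
    have h1 : m (Sum.inl j) + m (Sum.inr j) = m' (Sum.inl j) + m' (Sum.inr j) :=
      congrFun (congrArg Prod.fst he) j
    obtain ⟨m₀, hm₀⟩ : ∃ m₀, m = m₀ + (Finsupp.single (Sum.inl i) 1 + Finsupp.single (Sum.inr j) 1) := by
      refine ⟨m - (Finsupp.single (Sum.inl i) 1 + Finsupp.single (Sum.inr j) 1),
        (tsub_add_cancel_of_le ?_).symm⟩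
      intro k
      rcases k with k | k
      · by_cases hk : k = i
        · subst hk; simp; omega
        · simp [Ne.symm hk]
      · by_cases hk : k = j
        · subst hk; simp; omega
        · simp [Ne.symm hk]
    set m₁ := m₀ + (Finsupp.single (Sum.inl j) 1 + Finsupp.single (Sum.inr i) 1) with hm₁
    have hmi : m (Sum.inl i) = m₀ (Sum.inl i) + 1 := by rw [hm₀]; simp
    have hm1i : m₁ (Sum.inl i) = m₀ (Sum.inl i) := by
      rw [hm₁]; simp [hne]
    have hmj : m (Sum.inl j) = m₀ (Sum.inl j) := by
      rw [hm₀]; simp [hne.symm]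
    have hm1j : m₁ (Sum.inl j) = m₀ (Sum.inl j) + 1 := by rw [hm₁]; simp
    have hmk : ∀ k, k ≠ i → k ≠ j → m₁ (Sum.inl k) = m (Sum.inl k) := by
      intro k hki hkj
      rw [hm₁, hm₀]; simp [hki.symm, hkj.symm]
    have he₁ : expo (fun i j => i = j ∨ G.Adj i j) m₁ = expo (fun i j => i = j ∨ G.Adj i j) m := by
      rw [hm₁, hm₀, map_add _ m₀, map_add _ m₀, expo_move htr hadj]
    have hlt : ∑ k, (m₁ (Sum.inl k) - m' (Sum.inl k)) < ∑ k, (m (Sum.inl k) - m' (Sum.inl k)) := by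
      refine Finset.sum_lt_sum (fun k _ => ?_) ⟨i, Finset.mem_univ i, by omega⟩
      by_cases hki : k = i
      · subst hki; omega
      by_cases hkj : k = j
      · subst hkj; omega
      rw [hmk k hki hkj]
    have h3 := ih m₁ m' (by omega) (he₁.trans he)
    have h4 : (monomial m 1 - monomial m₁ 1 : MvPolynomial (Fin n ⊕ Fin n) K) =
        monomial m₀ 1 * bin K i j := by
      rw [hm₀, hm₁, bin, xv, xv, yv, yv, X, X, X, X, monomial_mul, monomial_mul, mul_sub,
        monomial_mul, monomial_mul]
      simp
    have h5 : (monomial m 1 - monomial m' 1 : MvPolynomial (Fin n ⊕ Fin n) K) =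
        monomial m₀ 1 * bin K i j + (monomial m₁ 1 - monomial m' 1) := by
      rw [← h4]; ring
    rw [h5]
    exact Ideal.add_mem _ (Ideal.mul_mem_left _ _ (bin_mem_bei hadj.symm)) h3

/-- The binomial edge ideal of a disjoint union of complete graphs is prime, being toric. -/
lemma bei_isPrime (htr : ∀ i j k, G.Adj i j → G.Adj j k → i ≠ k → G.Adj i k) :
    (bei K G).IsPrime := by
  classical
  let r : Fin n → Fin n → Prop := fun i j => i = j ∨ G.Adj i j
  let φ : MvPolynomial (Fin n ⊕ Fin n) K →+* AddMonoidAlgebra K ((Fin n → ℕ) × (Fin n → ℕ)) :=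
    AddMonoidAlgebra.mapDomainRingHom K (expo r)
  have hφ : ∀ m a, φ (monomial m a) = AddMonoidAlgebra.single (expo r m) a := fun m a =>
    AddMonoidAlgebra.mapDomain_single
  have hker : bei K G = RingHom.ker φ := by
    apply le_antisymm
    · rw [bei_le_iff]
      intro i j hij
      rw [RingHom.mem_ker, bin, map_sub, sub_eq_zero]
      rw [xv, xv, yv, yv, X, X, X, X, monomial_mul, monomial_mul, hφ, hφ]
      rw [expo_move htr hij]
    · -- a section of `φ` modulo the ideal
      let s : ((Fin n → ℕ) × (Fin n → ℕ)) → ((Fin n ⊕ Fin n) →₀ ℕ) := fun t =>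
        if h : ∃ m, expo r m = t then h.choose else 0
      have hs : ∀ m, expo r (s (expo r m)) = expo r m := by
        intro m
        have h : ∃ m', expo r m' = expo r m := ⟨m, rfl⟩
        simp only [s, dif_pos h]
        exact h.choose_spec
      let ψ : AddMonoidAlgebra K ((Fin n → ℕ) × (Fin n → ℕ)) →+
          (MvPolynomial (Fin n ⊕ Fin n) K ⧸ bei K G) :=
        (Finsupp.liftAddHom fun t => (Ideal.Quotient.mk (bei K G)).toAddMonoidHom.comp
          (monomial (s t)).toAddMonoidHom).comp AddMonoidAlgebra.coeffAddEquiv.toAddMonoidHom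
      have hψ : ∀ p, ψ (φ p) = Ideal.Quotient.mk (bei K G) p := by
        intro p
        induction p using MvPolynomial.induction_on' with
        | add p q hp hq => rw [map_add, map_add, hp, hq, map_add]
        | monomial m a =>
          have h1 : ψ (AddMonoidAlgebra.single (expo r m) a) =
              Ideal.Quotient.mk (bei K G) (monomial (s (expo r m)) a) := by
            show Finsupp.liftAddHom _ (Finsupp.single (expo r m) a) = _
            rw [Finsupp.liftAddHom_apply_single]
            rfl
          rw [hφ, h1, Ideal.Quotient.eq]
          have h2 := straighten (K := K) htr _ (s (expo r m)) m le_rfl (hs m)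
          have h3 : (monomial (s (expo r m)) a - monomial m a : MvPolynomial (Fin n ⊕ Fin n) K) =
              C a * (monomial (s (expo r m)) 1 - monomial m 1) := by
            rw [mul_sub, C_mul_monomial, C_mul_monomial, mul_one]
          rw [h3]
          exact Ideal.mul_mem_left _ _ h2
      intro p hp
      rw [RingHom.mem_ker] at hp
      rw [← Ideal.Quotient.eq_zero_iff_mem, ← hψ, hp, map_zero]
  rw [hker]
  exact RingHom.ker_isPrime φ

end Cluster

/-- A graph in which every vertex is free is a disjoint union of complete graphs. -/
lemma good_of_all_free {G : SimpleGraph (Fin n)} (h : ∀ v, IsFree G v) : Good G (bei K G) := by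
  have hx : ∀ w, xv K w ∉ bei K G := by
    intro w hw
    have : bei K G ≤ RingHom.ker (aeval (Sum.elim (fun _ => (1 : K)) (fun _ => (0 : K)))) := by
      rw [bei_le_iff]
      intro i j _
      simp [RingHom.mem_ker, bin, xv, yv]
    have := this hw
    simp [RingHom.mem_ker, xv] at this
  have hy : ∀ w, yv K w ∉ bei K G := by
    intro w hw
    have : bei K G ≤ RingHom.ker (aeval (Sum.elim (fun _ => (0 : K)) (fun _ => (1 : K)))) := by
      rw [bei_le_iff]
      intro i j _
      simp [RingHom.mem_ker, bin, xv, yv]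
    have := this hw
    simp [RingHom.mem_ker, yv] at this
  refine ⟨bei_isPrime fun i j k hij hjk hik => h j i k hij.symm hjk hik,
    fun w => iff_of_false (hx w) (hy w), fun w f hf => ?_, fun v _ => hx v⟩
  have : bei K G ≤ (bei K G).comap (kill K w) := by
    rw [bei_le_iff]
    intro i j hij
    rw [Ideal.mem_comap, kill_bin]
    split_ifs
    · exact Ideal.zero_mem _
    · exact bin_mem_bei hij
  exact this hf

/-- The graph obtained by completing the neighbourhood of `u`. -/
def addN (G : SimpleGraph (Fin n)) (u : Fin n) : SimpleGraph (Fin n) where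
  Adj i j := G.Adj i j ∨ (i ≠ j ∧ G.Adj u i ∧ G.Adj u j)
  symm := ⟨by
    rintro i j (h | ⟨h, h1, h2⟩)
    · exact Or.inl h.symm
    · exact Or.inr ⟨h.symm, h2, h1⟩⟩
  loopless := ⟨by
    rintro i (h | ⟨h, -⟩)
    · exact G.irrefl h
    · exact h rfl⟩

/-- The graph obtained by deleting the edges at `u`. -/
def delV (G : SimpleGraph (Fin n)) (u : Fin n) : SimpleGraph (Fin n) where
  Adj i j := G.Adj i j ∧ i ≠ u ∧ j ≠ u
  symm := ⟨fun _ _ h => ⟨h.1.symm, h.2.2, h.2.1⟩⟩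
  loopless := ⟨fun _ h => G.irrefl h.1⟩

lemma IsFree.addN {G : SimpleGraph (Fin n)} {v : Fin n} (h : IsFree G v) (u : Fin n) :
    IsFree (addN G u) v := by
  intro i j hi hj hij
  by_cases huv : G.Adj u v
  · have key : ∀ k, (BEIPaper.addN G u).Adj v k → k = u ∨ G.Adj u k := by
      rintro k (hk | ⟨-, -, hk⟩)
      · by_cases hku : k = u
        · exact Or.inl hku
        · exact Or.inr (h u k huv.symm hk (Ne.symm hku))
      · exact Or.inr hk
    rcases key i hi with rfl | hi' <;> rcases key j hj with rfl | hj'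
    · exact absurd rfl hij
    · exact Or.inl hj'
    · exact Or.inl hi'.symm
    · exact Or.inr ⟨hij, hi', hj'⟩
  · exact Or.inl (h i j (hi.resolve_right fun h => huv h.2.1) (hj.resolve_right fun h => huv h.2.1) hij)

lemma isFree_addN_self (G : SimpleGraph (Fin n)) (u : Fin n) : IsFree (addN G u) u := by
  intro i j hi hj hij
  exact Or.inr ⟨hij, hi.resolve_right fun h => G.irrefl h.2.1,
    hj.resolve_right fun h => G.irrefl h.2.1⟩

lemma IsFree.delV {G : SimpleGraph (Fin n)} {v : Fin n} (h : IsFree G v) (u : Fin n) :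
    IsFree (delV G u) v := fun i j hi hj hij => ⟨h i j hi.1 hj.1 hij, hi.2.2, hj.2.2⟩

lemma isFree_delV_self (G : SimpleGraph (Fin n)) (u : Fin n) : IsFree (delV G u) u :=
  fun _ _ hi _ _ => absurd rfl hi.2.1

/-- Ohtani's decomposition of a binomial edge ideal at a vertex. -/
lemma bei_eq_inf (G : SimpleGraph (Fin n)) (u : Fin n) :
    bei K G = bei K (addN G u) ⊓ (bei K (delV G u)).comap (kill K u) := by
  apply le_antisymm
  · refine le_inf (bei_mono fun i j h => Or.inl h) (bei_le_iff.2 fun i j hij => ?_)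
    rw [Ideal.mem_comap, kill_bin]
    split_ifs with h
    · exact Ideal.zero_mem _
    · push Not at h
      exact bin_mem_bei ⟨hij, h.1, h.2⟩
  · rintro f ⟨hf, hkf⟩
    let T : Set (MvPolynomial (Fin n ⊕ Fin n) K) :=
      {g | ∃ i j, G.Adj u i ∧ G.Adj u j ∧ g = bin K i j}
    have hle : bei K (addN G u) ≤ bei K G ⊔ Ideal.span T := by
      rw [bei_le_iff]
      rintro i j (h | ⟨-, hi, hj⟩)
      · exact Ideal.mem_sup_left (bin_mem_bei h)
      · exact Ideal.mem_sup_right (Ideal.subset_span ⟨i, j, hi, hj, rfl⟩)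
    have hdel : bei K (delV G u) ≤ bei K G := bei_mono fun i j h => h.1
    have hkill : ∀ h ∈ Ideal.span T, h - kill K u h ∈ bei K G := by
      intro h hh
      induction hh using Submodule.span_induction with
      | mem g hg =>
        obtain ⟨i, j, hi, hj, rfl⟩ := hg
        rw [kill_bin, if_neg (by
          rintro (rfl | rfl)
          · exact G.irrefl hi
          · exact G.irrefl hj), sub_self]
        exact Ideal.zero_mem _
      | zero => rw [map_zero, sub_zero]; exact Ideal.zero_mem _
      | add g h _ _ hg hh =>
        rw [map_add, add_sub_add_comm]
        exact Ideal.add_mem _ hg hh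
      | smul c g hgT hg =>
        have h1 : ∀ g ∈ Ideal.span T, xv K u * g ∈ bei K G ∧ yv K u * g ∈ bei K G := by
          intro g hg
          have h2 : Ideal.span T ≤ colonI (bei K G) (xv K u) ⊓ colonI (bei K G) (yv K u) := by
            refine Ideal.span_le.2 ?_
            rintro _ ⟨i, j, hi, hj, rfl⟩
            constructor
            · have : bin K i j * xv K u = xv K i * bin K u j - xv K j * bin K u i := by
                simp only [bin]; ring
              show bin K i j * xv K u ∈ bei K G
              rw [this]
              exact Ideal.sub_mem _ (Ideal.mul_mem_left _ _ (bin_mem_bei hj))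
                (Ideal.mul_mem_left _ _ (bin_mem_bei hi))
            · have : bin K i j * yv K u = yv K i * bin K u j - yv K j * bin K u i := by
                simp only [bin]; ring
              show bin K i j * yv K u ∈ bei K G
              rw [this]
              exact Ideal.sub_mem _ (Ideal.mul_mem_left _ _ (bin_mem_bei hj))
                (Ideal.mul_mem_left _ _ (bin_mem_bei hi))
          have h3 := h2 hg
          exact ⟨by rw [mul_comm]; exact h3.1, by rw [mul_comm]; exact h3.2⟩
        obtain ⟨p, q, hpq⟩ := Ideal.mem_span_pair.1 (sub_kill_mem u c)
        have h4 : c • g - kill K u (c • g) =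
            p * (xv K u * g) + q * (yv K u * g) + kill K u c * (g - kill K u g) := by
          rw [smul_eq_mul, map_mul]
          linear_combination -g * hpq
        rw [h4]
        exact Ideal.add_mem _ (Ideal.add_mem _ (Ideal.mul_mem_left _ _ (h1 g hgT).1)
          (Ideal.mul_mem_left _ _ (h1 g hgT).2)) (Ideal.mul_mem_left _ _ hg)
    obtain ⟨h₁, hh₁, h₂, hh₂, rfl⟩ := Submodule.mem_sup.1 (hle hf)
    have hkh₁ : kill K u h₁ ∈ bei K G := by
      have : bei K G ≤ (bei K G).comap (kill K u) := by
        rw [bei_le_iff]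
        intro i j hij
        rw [Ideal.mem_comap, kill_bin]
        split_ifs
        · exact Ideal.zero_mem _
        · exact bin_mem_bei hij
      exact this hh₁
    have h5 : kill K u h₁ + kill K u h₂ ∈ bei K G := by
      rw [← map_add]
      exact hdel hkf
    have h6 := (Ideal.add_mem_iff_right _ hkh₁).1 h5
    have h7 : h₂ = (h₂ - kill K u h₂) + kill K u h₂ := by ring
    refine Ideal.add_mem _ hh₁ ?_
    rw [h7]
    exact Ideal.add_mem _ (hkill h₂ hh₂) h6

/-- A binomial edge ideal is a finite intersection of good primes. -/
lemma exists_good (G : SimpleGraph (Fin n)) :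
    ∃ s : Set (Ideal (MvPolynomial (Fin n ⊕ Fin n) K)), s.Finite ∧ (∀ P ∈ s, Good G P) ∧
      sInf s = bei K G := by
  classical
  induction hN : Nat.card {v // ¬ IsFree G v} using Nat.strong_induction_on generalizing G with
  | _ N ih =>
  by_cases hall : ∀ v, IsFree G v
  · exact ⟨{bei K G}, Set.finite_singleton _, by
      rintro P rfl
      exact good_of_all_free hall, sInf_singleton⟩
  push Not at hall
  obtain ⟨u, hu⟩ := hall
  have hcard : ∀ H : SimpleGraph (Fin n), (∀ v, IsFree G v → IsFree H v) → IsFree H u →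
      Nat.card {v // ¬ IsFree H v} < N := by
    intro H h1 h2
    rw [← hN, Nat.card_eq_fintype_card, Nat.card_eq_fintype_card]
    refine Fintype.card_lt_of_injective_of_notMem
      (fun v : {v // ¬ IsFree H v} => (⟨v.1, fun h => v.2 (h1 _ h)⟩ : {v // ¬ IsFree G v}))
      (fun a b hab => Subtype.ext (Subtype.mk.inj hab)) (b := ⟨u, hu⟩) ?_
    rintro ⟨v, hv⟩
    exact v.2 ((Subtype.mk.inj hv) ▸ h2)
  obtain ⟨s₁, hs₁, hg₁, he₁⟩ := ih _ (hcard (addN G u) (fun v h => h.addN u)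
    (isFree_addN_self G u)) (addN G u) rfl
  obtain ⟨s₂, hs₂, hg₂, he₂⟩ := ih _ (hcard (delV G u) (fun v h => h.delV u)
    (isFree_delV_self G u)) (delV G u) rfl
  refine ⟨s₁ ∪ (fun P => P.comap (kill K u)) '' s₂, hs₁.union (hs₂.image _), ?_, ?_⟩
  · rintro P (hP | ⟨P, hP, rfl⟩)
    · have h := hg₁ P hP
      exact ⟨h.prime, h.xy, h.kill, fun v hv => h.free v (hv.addN u)⟩
    · have h := hg₂ P hP
      have := h.prime
      refine ⟨Ideal.comap_isPrime _ _, fun w => ?_, fun w f hf => ?_, fun v hv => ?_⟩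
      · rw [Ideal.mem_comap, Ideal.mem_comap, kill_xv, kill_yv]
        split_ifs
        · exact iff_of_true (Ideal.zero_mem _) (Ideal.zero_mem _)
        · exact h.xy w
      · rw [Ideal.mem_comap, ← kill_comm]
        exact h.kill w _ hf
      · rw [Ideal.mem_comap, kill_xv, if_neg (by rintro rfl; exact hu hv)]
        exact h.free v (hv.delV u)
  · rw [sInf_union, he₁, bei_eq_inf G u, ← he₂]
    congr 1
    ext f
    simp only [Submodule.mem_sInf, Ideal.mem_comap, Set.mem_image, forall_exists_index, and_imp,
      forall_apply_eq_imp_iff₂]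

lemma bei_isRadical (G : SimpleGraph (Fin n)) : (bei K G).IsRadical := by
  obtain ⟨s, -, hg, he⟩ := exists_good (K := K) G
  rw [← he]
  intro f hf
  obtain ⟨m, hm⟩ := hf
  rw [Submodule.mem_sInf] at hm ⊢
  exact fun P hP => (hg P hP).prime.mem_of_pow_mem m (hm P hP)

lemma good_of_minimalPrime {G : SimpleGraph (Fin n)} {P : Ideal (MvPolynomial (Fin n ⊕ Fin n) K)}
    (hP : P ∈ (bei K G).minimalPrimes) : Good G P := by
  obtain ⟨s, hs, hg, he⟩ := exists_good (K := K) G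
  have := hP.1.1
  obtain ⟨Q, hQ, hle⟩ := exists_le_of_sInf_le hs (he ▸ hP.1.2 : sInf s ≤ P)
  have : Q = P := le_antisymm hle (hP.2 ⟨(hg Q hQ).prime, he ▸ sInf_le hQ⟩ hle)
  exact this ▸ hg Q hQ

lemma HI_bei (G : SimpleGraph (Fin n)) : HI (bei K G) := by
  refine HI_span ?_
  rintro f ⟨i, j, -, -, rfl⟩
  exact ⟨1 + 1, ((isHomogeneous_X K _).mul (isHomogeneous_X K _)).sub
    ((isHomogeneous_X K _).mul (isHomogeneous_X K _))⟩

lemma bei_ne_top (G : SimpleGraph (Fin n)) : bei K G ≠ ⊤ := by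
  intro h
  have h1 : bei K G ≤ mIdeal K _ := by
    rw [bei_le_iff]
    intro i j _
    rw [mem_mIdeal_iff]
    simp [bin, xv, yv]
  exact mIdeal_ne_top (top_le_iff.1 (h ▸ h1))

end Graph


/-! ### Adjoining a pair of variables -/

section Ext

variable {K : Type} [Field K] {m : ℕ}

local notation "SA" => MvPolynomial (Fin m ⊕ Fin m) K
local notation "SB" => MvPolynomial (Fin (m + 1) ⊕ Fin (m + 1)) K
local notation "xl" => xv K (Fin.last m)
local notation "yl" => yv K (Fin.last m)

lemma liftS_xv (i : Fin m) : liftS K m (xv K i) = xv K (Fin.castSucc i) := by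
  simp [liftS, xv]

lemma liftS_yv (i : Fin m) : liftS K m (yv K i) = yv K (Fin.castSucc i) := by
  simp [liftS, yv]

variable (K m) in
/-- The retraction of `liftS` sending the last pair of variables to zero. -/
def proj : SB →ₐ[K] SA :=
  aeval (Sum.elim (Fin.lastCases 0 fun i => xv K i) (Fin.lastCases 0 fun i => yv K i))

lemma proj_xv_last : proj K m xl = 0 := by simp [proj, xv]
lemma proj_yv_last : proj K m yl = 0 := by simp [proj, yv]
lemma proj_xv (i : Fin m) : proj K m (xv K (Fin.castSucc i)) = xv K i := by simp [proj, xv]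
lemma proj_yv (i : Fin m) : proj K m (yv K (Fin.castSucc i)) = yv K i := by simp [proj, yv]

lemma algHom_ext_B {T : Type} [CommSemiring T] [Algebra K T] {f g : SB →ₐ[K] T}
    (h : f.comp (liftS K m) = g.comp (liftS K m)) (hx : f xl = g xl) (hy : f yl = g yl) :
    f = g := by
  apply MvPolynomial.algHom_ext
  rintro (i | i)
  · refine Fin.lastCases hx (fun i => ?_) i
    have := DFunLike.congr_fun h (xv K i)
    rw [AlgHom.comp_apply, AlgHom.comp_apply, liftS_xv] at this
    exact this
  · refine Fin.lastCases hy (fun i => ?_) i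
    have := DFunLike.congr_fun h (yv K i)
    rw [AlgHom.comp_apply, AlgHom.comp_apply, liftS_yv] at this
    exact this

lemma proj_comp_liftS : (proj K m).comp (liftS K m) = AlgHom.id K SA := by
  apply MvPolynomial.algHom_ext
  rintro (i | i)
  · show proj K m (liftS K m (xv K i)) = xv K i
    rw [liftS_xv, proj_xv]
  · show proj K m (liftS K m (yv K i)) = yv K i
    rw [liftS_yv, proj_yv]

@[simp] lemma proj_liftS (p : SA) : proj K m (liftS K m p) = p :=
  DFunLike.congr_fun proj_comp_liftS p

lemma proj_surjective : Function.Surjective (proj K m) := fun p => ⟨liftS K m p, proj_liftS p⟩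

lemma liftS_proj (p : SB) : liftS K m (proj K m p) = kill K (Fin.last m) p := by
  have : (liftS K m).comp (proj K m) = kill K (Fin.last m) := by
    apply MvPolynomial.algHom_ext
    rintro (i | i)
    · show liftS K m (proj K m (xv K i)) = kill K (Fin.last m) (xv K i)
      refine Fin.lastCases ?_ (fun i => ?_) i
      · rw [proj_xv_last, kill_xv, map_zero, if_pos rfl]
      · rw [proj_xv, kill_xv, liftS_xv, if_neg (Fin.castSucc_lt_last i).ne]
    · show liftS K m (proj K m (yv K i)) = kill K (Fin.last m) (yv K i)
      refine Fin.lastCases ?_ (fun i => ?_) i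
      · rw [proj_yv_last, kill_yv, map_zero, if_pos rfl]
      · rw [proj_yv, kill_yv, liftS_yv, if_neg (Fin.castSucc_lt_last i).ne]
  exact DFunLike.congr_fun this p

lemma comap_map_liftS (I : Ideal SA) : (I.map (liftS K m)).comap (liftS K m) = I := by
  apply le_antisymm _ Ideal.le_comap_map
  intro p hp
  have h1 : I.map (liftS K m) ≤ I.comap (proj K m) := by
    rw [Ideal.map_le_iff_le_comap]
    intro q hq
    simpa using hq
  simpa using h1 hp

lemma comap_proj_mIdeal : (mIdeal K (Fin m ⊕ Fin m)).comap (proj K m) = mIdeal K _ := by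
  ext p
  rw [Ideal.mem_comap, mem_mIdeal_iff, mem_mIdeal_iff]
  have : (constantCoeff (R := K)).comp (proj K m).toRingHom = constantCoeff := by
    apply MvPolynomial.ringHom_ext
    · intro r
      simp
    · rintro (i | i)
      · show constantCoeff (proj K m (xv K i)) = constantCoeff (xv K i)
        refine Fin.lastCases ?_ (fun i => ?_) i
        · rw [proj_xv_last]; simp [xv]
        · rw [proj_xv]; simp [xv]
      · show constantCoeff (proj K m (yv K i)) = constantCoeff (yv K i)
        refine Fin.lastCases ?_ (fun i => ?_) i
        · rw [proj_yv_last]; simp [yv]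
        · rw [proj_yv]; simp [yv]
  rw [← this]
  rfl

lemma liftS_component (n : ℕ) (p : SA) :
    liftS K m (homogeneousComponent n p) = homogeneousComponent n (liftS K m p) :=
  rename_homogeneousComponent n p

lemma liftS_homogeneous {p : SA} {d : ℕ} (h : p.IsHomogeneous d) :
    (liftS K m p).IsHomogeneous d := h.rename_isHomogeneous

lemma HI_comap_liftS {I : Ideal SB} (h : HI I) : HI (I.comap (liftS K m)) := by
  intro f hf n
  rw [Ideal.mem_comap, liftS_component]
  exact h _ hf n

lemma HI_map_liftS {I : Ideal SA} (h : HI I) : HI (I.map (liftS K m)) := by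
  have : I.map (liftS K m) = Ideal.span {g | ∃ d f, f ∈ I ∧ f.IsHomogeneous d ∧ g = liftS K m f} := by
    apply le_antisymm
    · rw [Ideal.map_le_iff_le_comap]
      intro f hf
      rw [Ideal.mem_comap, ← sum_homogeneousComponent f, map_sum]
      exact Ideal.sum_mem _ fun n _ => Ideal.subset_span
        ⟨n, _, h f hf n, homogeneousComponent_isHomogeneous n f, rfl⟩
    · refine Ideal.span_le.2 ?_
      rintro g ⟨d, f, hf, -, rfl⟩
      exact Ideal.mem_map_of_mem _ hf
  rw [this]
  refine HI_span ?_
  rintro g ⟨d, f, -, hf, rfl⟩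
  exact ⟨d, liftS_homogeneous hf⟩

/-- The larger ring as a polynomial ring over the smaller one in the last pair of variables, indexed
by `Bool`: `true` stands for the last `x` and `false` for the last `y`. -/
def toBool : SB →ₐ[K] MvPolynomial Bool SA :=
  aeval (Sum.elim (Fin.lastCases (X true) fun i => C (xv K i))
    (Fin.lastCases (X false) fun i => C (yv K i)))

/-- The inverse of `toBool`. -/
def ofBool : MvPolynomial Bool SA →ₐ[K] SB :=
  { eval₂Hom (liftS K m).toRingHom (fun b => if b then xl else yl) with
    commutes' := fun r => by
      show eval₂Hom _ _ (C (C r)) = _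
      rw [eval₂Hom_C]
      exact (liftS K m).commutes r }

lemma ofBool_C (p : SA) : ofBool (C p) = liftS K m p := eval₂Hom_C _ _ _
lemma ofBool_X (b : Bool) : ofBool (X b) = if b then xl else yl := eval₂Hom_X' _ _ _

lemma toBool_xl : toBool xl = X true := by simp [toBool, xv]
lemma toBool_yl : toBool yl = X false := by simp [toBool, yv]

lemma toBool_liftS (p : SA) : toBool (liftS K m p) = C p := by
  have : (toBool (K := K) (m := m)).comp (liftS K m) =
      IsScalarTower.toAlgHom K SA (MvPolynomial Bool SA) := by
    apply MvPolynomial.algHom_ext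
    rintro (i | i)
    · show toBool (liftS K m (xv K i)) = C (xv K i)
      rw [liftS_xv]; simp [toBool, xv]
    · show toBool (liftS K m (yv K i)) = C (yv K i)
      rw [liftS_yv]; simp [toBool, yv]
  exact DFunLike.congr_fun this p

lemma ofBool_toBool (p : SB) : ofBool (toBool p) = p := by
  have : (ofBool (K := K) (m := m)).comp toBool = AlgHom.id K SB := by
    apply algHom_ext_B
    · ext1 i
      show ofBool (toBool (liftS K m (X i))) = liftS K m (X i)
      rw [toBool_liftS, ofBool_C]
    · show ofBool (toBool xl) = xl
      rw [toBool_xl, ofBool_X, if_pos rfl]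
    · show ofBool (toBool yl) = yl
      rw [toBool_yl, ofBool_X, if_neg (by simp)]
  exact DFunLike.congr_fun this p

lemma toBool_ofBool (p : MvPolynomial Bool SA) : toBool (ofBool p) = p := by
  have : (toBool (K := K) (m := m)).toRingHom.comp ofBool.toRingHom = RingHom.id _ := by
    apply MvPolynomial.ringHom_ext
    · intro r
      show toBool (ofBool (C r)) = C r
      rw [ofBool_C, toBool_liftS]
    · intro b
      show toBool (ofBool (X b)) = X b
      rw [ofBool_X]
      cases b
      · exact toBool_yl
      · exact toBool_xl
  exact DFunLike.congr_fun this p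

/-- Membership in an extended ideal is tested on the coefficients with respect to the last pair
of variables. -/
lemma mem_map_liftS_iff {I : Ideal SA} {p : SB} :
    p ∈ I.map (liftS K m) ↔ ∀ e, coeff e (toBool p) ∈ I := by
  rw [← mem_map_C_iff]
  constructor
  · intro h
    have : I.map (liftS K m) ≤ (I.map (C : SA →+* MvPolynomial Bool SA)).comap toBool := by
      rw [Ideal.map_le_iff_le_comap]
      intro q hq
      rw [Ideal.mem_comap, Ideal.mem_comap, toBool_liftS]
      exact Ideal.mem_map_of_mem _ hq
    exact this h
  · intro h
    have : (I.map (C : SA →+* MvPolynomial Bool SA)) ≤ (I.map (liftS K m)).comap ofBool := by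
      rw [Ideal.map_le_iff_le_comap]
      intro q hq
      rw [Ideal.mem_comap, Ideal.mem_comap, ofBool_C]
      exact Ideal.mem_map_of_mem _ hq
    have h2 := this h
    rwa [Ideal.mem_comap, ofBool_toBool] at h2

/-- A homomorphism out of the smaller ring, applied to the coefficients with respect to the last
pair of variables. -/
def redQ {D : Type} [CommRing D] (q : SA →+* D) : SB →+* MvPolynomial Bool D :=
  (MvPolynomial.map q).comp (toBool (K := K) (m := m)).toRingHom

lemma redQ_surjective {D : Type} [CommRing D] {q : SA →+* D} (hq : Function.Surjective q) :
    Function.Surjective (redQ q) := by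
  intro p
  obtain ⟨r, rfl⟩ := MvPolynomial.map_surjective q hq p
  refine ⟨ofBool r, ?_⟩
  show MvPolynomial.map _ (toBool (ofBool r)) = _
  rw [toBool_ofBool]

lemma map_liftS_eq_comap {D : Type} [CommRing D] (q : SA →+* D) :
    (RingHom.ker q).map (liftS K m) = (⊥ : Ideal (MvPolynomial Bool D)).comap (redQ q) := by
  ext p
  rw [mem_map_liftS_iff, Ideal.mem_comap, Ideal.mem_bot]
  show _ ↔ MvPolynomial.map _ (toBool p) = 0
  rw [MvPolynomial.ext_iff]
  simp [coeff_map]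

lemma map_ker_isPrime {D : Type} [CommRing D] [IsDomain D] (q : SA →+* D) :
    ((RingHom.ker q).map (liftS K m)).IsPrime := by
  rw [map_liftS_eq_comap]
  have : (⊥ : Ideal (MvPolynomial Bool D)).IsPrime := Ideal.isPrime_bot
  exact Ideal.comap_isPrime _ _

lemma map_liftS_isPrime {Q : Ideal SA} (h : Q.IsPrime) : (Q.map (liftS K m)).IsPrime := by
  have := map_ker_isPrime (Ideal.Quotient.mk Q)
  rwa [Ideal.mk_ker] at this

lemma map_liftS_ne_top {I : Ideal SA} (h : I ≠ ⊤) : I.map (liftS K m) ≠ ⊤ := by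
  intro h1
  apply h
  rw [← comap_map_liftS I, h1, Ideal.comap_top]

lemma pdim_comap_bot {R T : Type} [CommRing R] [CommRing T] (f : R →+* T)
    (hf : Function.Surjective f) :
    pdim ((⊥ : Ideal T).comap f) = ((ringKrullDim T).unbotD 0).toNat := by
  rw [pdim_comap f hf, pdim, ringKrullDim_eq_of_ringEquiv (RingEquiv.quotientBot T)]

lemma pdim_map_ker {D : Type} [CommRing D] [IsNoetherianRing D] {q : SA →+* D}
    (hq : Function.Surjective q) :
    pdim ((RingHom.ker q).map (liftS K m)) = ((ringKrullDim D + 2).unbotD 0).toNat := by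
  rw [map_liftS_eq_comap, pdim_comap_bot (redQ q) (redQ_surjective hq),
    MvPolynomial.ringKrullDim_of_isNoetherianRing]
  simp

lemma pdim_map_liftS {Q : Ideal SA} (h : Q ≠ ⊤) : pdim (Q.map (liftS K m)) = pdim Q + 2 := by
  have h1 := pdim_map_ker (m := m) (q := Ideal.Quotient.mk Q) Ideal.Quotient.mk_surjective
  rw [Ideal.mk_ker] at h1
  rw [h1, ← pdim_coe h]
  rfl

lemma pdim_le_comap {Q' : Ideal SB} (h : Q'.IsPrime) : pdim Q' ≤ pdim (Q'.comap (liftS K m)) + 2 := by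
  rw [← pdim_map_liftS (h.comap _).ne_top]
  exact pdim_anti Ideal.map_comap_le h.ne_top

/-- The coefficient `a` of the last `y` in `aY - bX` is not in `Q`. -/
lemma not_mem_map_liftS {Q : Ideal SA} {a b : SA} (ha : a ∉ Q) :
    liftS K m a * yl - liftS K m b * xl ∉ Q.map (liftS K m) := by
  intro h
  rw [mem_map_liftS_iff] at h
  have h1 := h (Finsupp.single false 1)
  rw [map_sub, map_mul, map_mul, toBool_liftS, toBool_liftS, toBool_xl, toBool_yl, coeff_sub,
    coeff_C_mul, coeff_C_mul, coeff_X, coeff_X, if_pos rfl,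
    if_neg (by
      intro h
      have := DFunLike.congr_fun h true
      simp at this), mul_one, mul_zero, sub_zero] at h1
  exact ha h1

/-- A prime containing `aY - bX` but not `a` is strictly larger than the extension of its
contraction. -/
lemma pdim_le_comap_of_mem {Q' : Ideal SB} (h : Q'.IsPrime) {a b : SA}
    (hab : liftS K m a * yl - liftS K m b * xl ∈ Q') (ha : liftS K m a ∉ Q') :
    pdim Q' ≤ pdim (Q'.comap (liftS K m)) + 1 := by
  have hQ := h.comap (liftS K m)
  have := map_liftS_isPrime (m := m) hQ
  have hlt : (Q'.comap (liftS K m)).map (liftS K m) < Q' := by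
    refine lt_of_le_of_ne Ideal.map_comap_le ?_
    intro he
    rw [← he] at hab
    exact not_mem_map_liftS (Q := Q'.comap (liftS K m)) (fun h => ha h) hab
  have h1 := pdim_lt hlt h.ne_top
  rw [pdim_map_liftS hQ.ne_top] at h1
  omega

/-- Over a prime `P` not containing `a` lies a prime of the larger ring containing `aY - bX`, of
dimension at least one more, the generic point of the line `aY = bX`. -/
lemma exists_line_prime {P : Ideal SA} (hP : P.IsPrime) (a b : SA) (ha : a ∉ P) :
    ∃ P'' : Ideal SB, P''.IsPrime ∧ P''.comap (liftS K m) = P ∧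
      liftS K m a * yl - liftS K m b * xl ∈ P'' ∧ xl ∉ P'' ∧ P'' ≤ P.comap (proj K m) ∧
      pdim P + 1 ≤ pdim P'' := by
  let F := FractionRing (SA ⧸ P)
  let θ : SA →+* F := (algebraMap (SA ⧸ P) F).comp (Ideal.Quotient.mk P)
  have hθ : ∀ s, θ s = 0 ↔ s ∈ P := by
    intro s
    show algebraMap (SA ⧸ P) F (Ideal.Quotient.mk P s) = 0 ↔ _
    rw [map_eq_zero_iff _ (IsFractionRing.injective (SA ⧸ P) F), Ideal.Quotient.eq_zero_iff_mem]
  let τ : SB →+* Polynomial F :=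
    (eval₂Hom (Polynomial.C.comp θ) (fun b' : Bool =>
      if b' then Polynomial.X else Polynomial.C (θ b / θ a) * Polynomial.X)).comp
      (toBool (K := K) (m := m)).toRingHom
  have hτι : ∀ s, τ (liftS K m s) = Polynomial.C (θ s) := by
    intro s
    show eval₂Hom _ _ (toBool (liftS K m s)) = _
    rw [toBool_liftS, eval₂Hom_C]; rfl
  have hτx : τ xl = Polynomial.X := by
    show eval₂Hom _ _ (toBool xl) = _
    rw [toBool_xl, eval₂Hom_X', if_pos rfl]
  have hτy : τ yl = Polynomial.C (θ b / θ a) * Polynomial.X := by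
    show eval₂Hom _ _ (toBool yl) = _
    rw [toBool_yl, eval₂Hom_X', if_neg (by simp)]
  have hle : RingHom.ker τ ≤ P.comap (proj K m) := by
    intro p hp
    have h1 : (Polynomial.evalRingHom 0).comp τ = θ.comp (proj K m).toRingHom := by
      apply MvPolynomial.ringHom_ext
      · intro r
        have : (C r : SB) = liftS K m (C r) := ((liftS K m).commutes r).symm
        show Polynomial.eval 0 (τ (C r)) = θ (proj K m (C r))
        rw [this, hτι, proj_liftS, Polynomial.eval_C]
      · rintro (i | i)
        · show Polynomial.eval 0 (τ (xv K i)) = θ (proj K m (xv K i))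
          refine Fin.lastCases ?_ (fun i => ?_) i
          · rw [proj_xv_last, hτx]; simp
          · rw [proj_xv, ← liftS_xv, hτι]; simp
        · show Polynomial.eval 0 (τ (yv K i)) = θ (proj K m (yv K i))
          refine Fin.lastCases ?_ (fun i => ?_) i
          · rw [proj_yv_last, hτy]; simp
          · rw [proj_yv, ← liftS_yv, hτι]; simp
    have h2 : Polynomial.eval 0 (τ p) = θ (proj K m p) := DFunLike.congr_fun h1 p
    rw [RingHom.mem_ker] at hp
    rw [hp, Polynomial.eval_zero] at h2
    exact (hθ _).1 h2.symm
  have hpr : (RingHom.ker τ).IsPrime := RingHom.ker_isPrime τ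
  have hX : xl ∉ RingHom.ker τ := by
    rw [RingHom.mem_ker, hτx]
    exact Polynomial.X_ne_zero
  refine ⟨RingHom.ker τ, hpr, ?_, ?_, hX, hle, ?_⟩
  · ext s
    rw [Ideal.mem_comap, RingHom.mem_ker, hτι, Polynomial.C_eq_zero, hθ]
  · have ha0 : θ a ≠ 0 := fun h => ha ((hθ a).1 h)
    rw [RingHom.mem_ker, map_sub, map_mul, map_mul, hτι, hτι, hτx, hτy, ← mul_assoc,
      ← Polynomial.C_mul, mul_div_cancel₀ _ ha0, sub_self]
  · have hlt : RingHom.ker τ < P.comap (proj K m) := by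
      refine lt_of_le_of_ne hle fun he => ?_
      refine hX ?_
      rw [he, Ideal.mem_comap, proj_xv_last]
      exact P.zero_mem
    have h1 := pdim_lt hlt (hP.comap (proj K m)).ne_top
    have h2 : pdim (P.comap (proj K m)) = pdim P := pdim_comap (proj K m).toRingHom proj_surjective P
    omega

lemma dep_comap_iff {R T : Type} [CommRing R] [CommRing T] (f : R →+* T)
    (hf : Function.Surjective f) {mT : Ideal T} (k : ℕ) (I : Ideal T) :
    dep (mT.comap f) k (I.comap f) ↔ dep mT k I := by
  have hsup : ∀ (I : Ideal T) r, I.comap f ⊔ Ideal.span {r} = (I ⊔ Ideal.span {f r}).comap f := by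
    intro I r
    ext s
    rw [Ideal.mem_comap, sup_comm, sup_comm I, Ideal.mem_span_singleton_sup,
      Ideal.mem_span_singleton_sup]
    constructor
    · rintro ⟨c, b, hb, rfl⟩
      exact ⟨f c, f b, hb, by simp⟩
    · rintro ⟨c, b, hb, h⟩
      obtain ⟨c, rfl⟩ := hf c
      refine ⟨c, s - c * r, ?_, by ring⟩
      rw [Ideal.mem_comap, map_sub, map_mul, ← h]
      simpa using hb
  induction k generalizing I with
  | zero =>
    show I.comap f ≤ mT.comap f ↔ I ≤ mT
    exact Ideal.comap_le_comap_iff_of_surjective f hf _ _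
  | succ k ih =>
    constructor
    · rintro ⟨r, hr, hreg, h⟩
      refine ⟨f r, hr, fun s hs => ?_, (ih _).1 (hsup I r ▸ h)⟩
      obtain ⟨s, rfl⟩ := hf s
      exact hreg s (by rwa [Ideal.mem_comap, map_mul])
    · rintro ⟨r, hr, hreg, h⟩
      obtain ⟨r, rfl⟩ := hf r
      refine ⟨r, hr, fun s hs => ?_, hsup I r ▸ (ih _).2 h⟩
      rw [Ideal.mem_comap, map_mul] at hs
      exact hreg _ hs

lemma X_regular (I : Ideal SA) (s : SB) (hs : xl * s ∈ I.map (liftS K m)) :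
    s ∈ I.map (liftS K m) := by
  rw [mem_map_liftS_iff] at hs ⊢
  intro e
  have := hs (Finsupp.single true 1 + e)
  rwa [map_mul, toBool_xl, coeff_X_mul] at this

lemma Y_regular (I : Ideal SA) (s : SB) (hs : yl * s ∈ I.map (liftS K m)) :
    s ∈ I.map (liftS K m) := by
  rw [mem_map_liftS_iff] at hs ⊢
  intro e
  have := hs (Finsupp.single false 1 + e)
  rwa [map_mul, toBool_yl, coeff_X_mul] at this

lemma Y_regular' (I : Ideal SA) (s : SB) (hs : yl * s ∈ I.map (liftS K m) ⊔ Ideal.span {xl}) :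
    s ∈ I.map (liftS K m) ⊔ Ideal.span {xl} := by
  let κ : SB →ₐ[K] SB :=
    aeval (Sum.elim (Fin.lastCases 0 fun i => xv K i.castSucc) fun i => yv K i)
  have hκx : κ xl = 0 := by simp [κ, xv]
  have hκy : κ yl = yl := by simp [κ, yv]
  have hκι : ∀ p, κ (liftS K m p) = liftS K m p := by
    have : κ.comp (liftS K m) = liftS K m := by
      apply MvPolynomial.algHom_ext
      rintro (i | i)
      · show κ (liftS K m (xv K i)) = liftS K m (xv K i)
        rw [liftS_xv]; simp [κ, xv]
      · show κ (liftS K m (yv K i)) = liftS K m (yv K i)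
        rw [liftS_yv]; simp [κ, yv]
    exact fun p => DFunLike.congr_fun this p
  have hsub : ∀ p, p - κ p ∈ Ideal.span {xl} := by
    intro p
    have h : (Ideal.Quotient.mkₐ K (Ideal.span {xl})).comp κ = Ideal.Quotient.mkₐ K _ := by
      apply algHom_ext_B
      · ext1 i
        show Ideal.Quotient.mk _ (κ (liftS K m (X i))) = Ideal.Quotient.mk _ (liftS K m (X i))
        rw [hκι]
      · show Ideal.Quotient.mk _ (κ xl) = Ideal.Quotient.mk _ xl
        rw [hκx, map_zero, eq_comm, Ideal.Quotient.eq_zero_iff_mem]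
        exact Ideal.mem_span_singleton_self _
      · show Ideal.Quotient.mk _ (κ yl) = Ideal.Quotient.mk _ yl
        rw [hκy]
    rw [← Ideal.Quotient.eq_zero_iff_mem, map_sub, sub_eq_zero]
    exact (DFunLike.congr_fun h p).symm
  have hκI : I.map (liftS K m) ⊔ Ideal.span {xl} ≤ (I.map (liftS K m)).comap κ := by
    refine sup_le ?_ ?_
    · rw [Ideal.map_le_iff_le_comap]
      intro p hp
      rw [Ideal.mem_comap, Ideal.mem_comap, hκι]
      exact Ideal.mem_map_of_mem _ hp
    · rw [Ideal.span_singleton_le_iff_mem, Ideal.mem_comap, hκx]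
      exact Ideal.zero_mem _
  have h1 := hκI hs
  rw [Ideal.mem_comap, map_mul, hκy] at h1
  have h2 := Y_regular I _ h1
  have h3 : s = κ s + (s - κ s) := by ring
  rw [h3]
  exact Ideal.add_mem _ (Ideal.mem_sup_left h2) (Ideal.mem_sup_right (hsub s))

lemma comap_proj_eq (I : Ideal SA) :
    I.comap (proj K m) = I.map (liftS K m) ⊔ Ideal.span {xl} ⊔ Ideal.span {yl} := by
  apply le_antisymm
  · intro p hp
    have h1 : kill K (Fin.last m) p ∈ I.map (liftS K m) := by
      rw [← liftS_proj]
      exact Ideal.mem_map_of_mem _ hp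
    have h2 := sub_kill_mem (Fin.last m) p
    rw [Ideal.span_insert] at h2
    have h3 : p = kill K (Fin.last m) p + (p - kill K (Fin.last m) p) := by ring
    rw [h3, sup_assoc]
    exact Ideal.add_mem _ (Ideal.mem_sup_left h1) (Ideal.mem_sup_right h2)
  · refine sup_le (sup_le ?_ ?_) ?_
    · rw [Ideal.map_le_iff_le_comap]
      intro p hp
      simpa using hp
    · rw [Ideal.span_singleton_le_iff_mem, Ideal.mem_comap, proj_xv_last]
      exact I.zero_mem
    · rw [Ideal.span_singleton_le_iff_mem, Ideal.mem_comap, proj_yv_last]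
      exact I.zero_mem

lemma xv_mem_mIdeal {n : ℕ} (i : Fin n) : xv K i ∈ mIdeal K (Fin n ⊕ Fin n) :=
  Ideal.subset_span ⟨_, rfl⟩

lemma yv_mem_mIdeal {n : ℕ} (i : Fin n) : yv K i ∈ mIdeal K (Fin n ⊕ Fin n) :=
  Ideal.subset_span ⟨_, rfl⟩

/-- Adjoining two variables raises the depth by exactly two. -/
lemma dep_map_liftS_iff (k : ℕ) (I : Ideal SA) :
    dep (mIdeal K _) (k + 2) (I.map (liftS K m)) ↔ dep (mIdeal K _) k I := by
  rw [← dep_sup_span_iff mIdeal_ne_top (xv_mem_mIdeal (Fin.last m)) (X_regular I),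
    ← dep_sup_span_iff mIdeal_ne_top (yv_mem_mIdeal (Fin.last m)) (Y_regular' I),
    ← comap_proj_eq, ← comap_proj_mIdeal]
  exact dep_comap_iff (proj K m).toRingHom proj_surjective k I

/-- An ideal of the larger ring stable under killing the last pair of variables contracts to an
ideal whose depth drops by at most two. -/
lemma dep_comap_liftS (k : ℕ) : ∀ {U' : Ideal SB}, HI U' →
    (∀ f ∈ U', liftS K m (proj K m f) ∈ U') → dep (mIdeal K _) (k + 2) U' →
    dep (mIdeal K _) k (U'.comap (liftS K m)) := by
  induction k with
  | zero =>
    intro U' hU hk h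
    exact (HI_comap_liftS hU).le_mIdeal fun ht => h.ne_top (by
      rw [Ideal.eq_top_iff_one] at ht ⊢
      simpa using ht)
  | succ k ih =>
    intro U' hU hk h
    obtain ⟨d, r, hd, hr, hrm, hrQ⟩ := homogeneous_avoidance
      (s := (fun Q : Ideal SB => Q.comap (liftS K m)) '' hAss U') ((hAss_finite U').image _)
      (by
        rintro _ ⟨Q, hQ, rfl⟩
        have := hQ.1
        exact Ideal.comap_isPrime _ _) (HI_mIdeal (K := K) (σ := Fin m ⊕ Fin m)) le_rfl (by
        rintro _ ⟨Q, hQ, rfl⟩ hle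
        have h1 := dep_le_pdim_hAss _ hU hQ h
        have h2 : pdim Q ≤ pdim ((mIdeal K (Fin m ⊕ Fin m)).map (liftS K m)) :=
          pdim_anti (Ideal.map_le_iff_le_comap.2 hle) hQ.1.ne_top
        rw [pdim_map_liftS mIdeal_ne_top, pdim_mIdeal_lt mIdeal_ne_top le_rfl] at h2
        omega)
    have hreg := regular_of_not_mem_hAss hU (liftS_homogeneous hr)
      fun Q hQ hm => hrQ _ ⟨Q, hQ, rfl⟩ hm
    have hιm : liftS K m r ∈ mIdeal K _ := mem_mIdeal_of_homogeneous (liftS_homogeneous hr) hd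
    have hst : ∀ f ∈ U' ⊔ Ideal.span {liftS K m r},
        ∃ c, ∃ u ∈ U', f = u + c * liftS K m r ∧
          proj K m f = proj K m u + proj K m c * r := by
      intro f hf
      rw [sup_comm, Ideal.mem_span_singleton_sup] at hf
      obtain ⟨c, u, hu, rfl⟩ := hf
      exact ⟨c, u, hu, add_comm _ _, by simp [add_comm]⟩
    have h2 := ih (hU.sup (HI_span_singleton (liftS_homogeneous hr))) (by
        intro f hf
        obtain ⟨c, u, hu, -, h⟩ := hst f hf
        rw [h, map_add, map_mul]
        exact Ideal.add_mem _ (Ideal.mem_sup_left (hk u hu))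
          (Ideal.mem_sup_right (Ideal.mul_mem_left _ _ (Ideal.mem_span_singleton_self _))))
      ((dep_sup_span_iff mIdeal_ne_top hιm hreg).2 h)
    refine ⟨r, hrm, fun s hs => ?_, ?_⟩
    · rw [Ideal.mem_comap, map_mul] at hs
      exact hreg _ hs
    · convert h2 using 1
      apply le_antisymm
      · refine sup_le (Ideal.comap_mono le_sup_left) ?_
        rw [Ideal.span_singleton_le_iff_mem]
        exact Ideal.mem_sup_right (Ideal.mem_span_singleton_self _)
      · intro p hp
        obtain ⟨c, u, hu, -, h⟩ := hst _ hp
        rw [proj_liftS] at h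
        rw [h]
        exact Ideal.add_mem _ (Ideal.mem_sup_left (hk u hu))
          (Ideal.mem_sup_right (Ideal.mul_mem_left _ _ (Ideal.mem_span_singleton_self _)))

end Ext


/-! ### From the small ring to the large ring -/

section Fwd

variable {K : Type} [Field K] {m : ℕ}

local notation "SA" => MvPolynomial (Fin m ⊕ Fin m) K
local notation "SB" => MvPolynomial (Fin (m + 1) ⊕ Fin (m + 1)) K
local notation "xl" => xv K (Fin.last m)
local notation "yl" => yv K (Fin.last m)

variable (K m) in
/-- The linear form `aY - bX` in the last pair of variables. -/
def lin (a b : SA) : SB := liftS K m a * yl - liftS K m b * xl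

lemma lin_homogeneous {a b : SA} (ha : a.IsHomogeneous 1) (hb : b.IsHomogeneous 1) :
    (lin K m a b).IsHomogeneous 2 :=
  ((liftS_homogeneous ha).mul (isHomogeneous_X K _)).sub
    ((liftS_homogeneous hb).mul (isHomogeneous_X K _))

lemma lin_mem_mIdeal (a b : SA) : lin K m a b ∈ mIdeal K _ :=
  Ideal.sub_mem _ (Ideal.mul_mem_left _ _ (yv_mem_mIdeal _))
    (Ideal.mul_mem_left _ _ (xv_mem_mIdeal _))

/-- If `a` is regular modulo `I` then so is `aY - bX` modulo the extension of `I`. -/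
lemma lin_regular {I : Ideal SA} {a b : SA} (ha : ∀ s, a * s ∈ I → s ∈ I) (s : SB)
    (hs : lin K m a b * s ∈ I.map (liftS K m)) : s ∈ I.map (liftS K m) := by
  rw [mem_map_liftS_iff] at hs ⊢
  rw [lin, map_mul, map_sub, map_mul, map_mul, toBool_liftS, toBool_liftS, toBool_xl, toBool_yl] at hs
  suffices h : ∀ k : ℕ, ∀ e : Bool →₀ ℕ, e true = k → coeff e (toBool s) ∈ I from
    fun e => h _ e rfl
  intro k
  induction k with
  | zero =>
    intro e he
    have h1 := hs (Finsupp.single false 1 + e)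
    rw [sub_mul, coeff_sub, mul_assoc, mul_assoc, coeff_C_mul, coeff_C_mul, coeff_X_mul,
      coeff_X_mul', if_neg (by simp [he]), mul_zero, sub_zero] at h1
    exact ha _ h1
  | succ k ih =>
    intro e he
    obtain ⟨e', rfl⟩ : ∃ e', e = Finsupp.single true 1 + e' :=
      ⟨e - Finsupp.single true 1, (add_tsub_cancel_of_le (by
        rw [Finsupp.single_le_iff]; omega)).symm⟩
    have h1 := hs (Finsupp.single false 1 + (Finsupp.single true 1 + e'))
    rw [sub_mul, coeff_sub, mul_assoc, mul_assoc, coeff_C_mul, coeff_C_mul, coeff_X_mul,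
      add_left_comm, coeff_X_mul] at h1
    have h2 : coeff (Finsupp.single false 1 + e') (toBool s) ∈ I := ih _ (by
      simp at he ⊢; omega)
    have h3 := Ideal.add_mem _ h1 (Ideal.mul_mem_left _ b h2)
    rw [sub_add_cancel] at h3
    exact ha _ h3

/-- The dimension bound for a prime of the larger ring containing `aY - bX` and lying over a prime
that contains a prime `P` avoiding `a`. -/
lemma pdim_le_of_lin {P : Ideal SA} {Q' : Ideal SB} (hP : P.IsPrime) (hQ' : Q'.IsPrime) {a b : SA}
    (hg : lin K m a b ∈ Q') (ha : a ∉ P) (hle : P ≤ Q'.comap (liftS K m)) :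
    pdim Q' ≤ pdim P + 1 := by
  have hQ := hQ'.comap (liftS K m)
  by_cases haQ : liftS K m a ∈ Q'
  · have h1 := pdim_le_comap hQ'
    have h2 : P < Q'.comap (liftS K m) := lt_of_le_of_ne hle fun h => ha (h ▸ haQ)
    have h3 := pdim_lt h2 hQ.ne_top
    omega
  · have h1 := pdim_le_comap_of_mem hQ' hg haQ
    have h2 := pdim_anti hle hQ.ne_top
    omega

/-- Forward direction: `J + (aY - bX)` inherits approximate Cohen-Macaulayness from `J`, for linear
forms `a` and `b` such that `a` lies in no minimal prime of `J`. -/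
theorem isACM_extend {J : Ideal SA} (hJ : HI J) (htop : J ≠ ⊤) (hrad : J.IsRadical) {a b : SA}
    (ha : a.IsHomogeneous 1) (hb : b.IsHomogeneous 1) (hmin : ∀ P ∈ J.minimalPrimes, a ∉ P)
    (hrad' : (J.map (liftS K m) ⊔ Ideal.span {lin K m a b}).IsRadical) (h : IsACM K J) :
    IsACM K (J.map (liftS K m) ⊔ Ideal.span {lin K m a b}) := by
  obtain ⟨e, f, hf, hd, hdU, hdJ, hfP⟩ := exists_of_isACM hJ htop hrad h
  set U := colonI J f with hU
  have hUH : HI U := HI_colonI hJ hf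
  have hJU : J ≤ U := fun s hs => Ideal.mul_mem_right _ _ hs
  have haJ : ∀ s, a * s ∈ J → s ∈ J := fun s hs => mem_of_forall_minimalPrimes hrad fun P hP =>
    (hP.1.1.mem_or_mem (hP.1.2 hs)).resolve_left (hmin P hP)
  have haU : ∀ s, a * s ∈ U → s ∈ U := fun s hs => mem_colonI.2 (haJ _ (by
    rw [hU, mem_colonI, mul_assoc] at hs; exact hs))
  have hdU' : dep (mIdeal K _) (pdim J + 1) (U.map (liftS K m) ⊔ Ideal.span {lin K m a b}) :=
    (dep_sup_span_iff mIdeal_ne_top (lin_mem_mIdeal a b) (lin_regular haU)).2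
      ((dep_map_liftS_iff _ _).2 hdU)
  have hdJ' : dep (mIdeal K _) (pdim J - 1 + 1) (J.map (liftS K m) ⊔ Ideal.span {lin K m a b}) :=
    (dep_sup_span_iff mIdeal_ne_top (lin_mem_mIdeal a b) (lin_regular haJ)).2
      ((dep_map_liftS_iff _ _).2 hdJ)
  have hJ'H := (HI_map_liftS hJ).sup (HI_span_singleton (lin_homogeneous ha hb))
  have hU'H := (HI_map_liftS hUH).sup (HI_span_singleton (lin_homogeneous ha hb))
  set J' := J.map (liftS K m) ⊔ Ideal.span {lin K m a b} with hJ'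
  set U' := U.map (liftS K m) ⊔ Ideal.span {lin K m a b} with hU'
  have hJU' : J' ≤ U' := sup_le_sup_right (Ideal.map_mono hJU) _
  have hgJ' : lin K m a b ∈ J' := Ideal.mem_sup_right (Ideal.mem_span_singleton_self _)
  have key : ∀ Q' : Ideal SB, Q'.IsPrime → J' ≤ Q' → ∃ P ∈ J.minimalPrimes,
      P ≤ Q'.comap (liftS K m) ∧ pdim Q' ≤ pdim P + 1 := by
    intro Q' hQ' hle
    have := hQ'.comap (liftS K m)
    obtain ⟨P, hP, hPQ⟩ := Ideal.exists_minimalPrimes_le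
      (Ideal.map_le_iff_le_comap.1 (le_sup_left.trans hle) : J ≤ Q'.comap (liftS K m))
    exact ⟨P, hP, hPQ, pdim_le_of_lin hP.1.1 hQ' (hle hgJ') (hmin P hP) hPQ⟩
  have hdim : pdim J' = pdim J + 1 := by
    apply le_antisymm
    · obtain ⟨Q', hQ', hQd⟩ := exists_minimalPrime_pdim hdJ'.ne_top
      obtain ⟨P, hP, -, hPd⟩ := key Q' hQ'.1.1 hQ'.1.2
      have := pdim_anti hP.1.2 hP.1.1.ne_top
      omega
    · exact (dep_le_pdim hU'H hdU').trans (pdim_anti hJU' hdU'.ne_top)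
  refine isACM_of hJ'H hdJ'.ne_top hrad' hU'H hJU' (by omega) (hdim ▸ hdU')
    (by rw [hdim]; exact hdJ'.mono (by omega)) ?_
  intro P' hP' hle hd'
  obtain ⟨P, hP, hPQ, hPd⟩ := key P' hP' hle
  have hfP' := hfP P hP.1.1 hP.1.2 (by omega)
  refine sup_le ?_ (le_sup_right.trans hle)
  rw [Ideal.map_le_iff_le_comap]
  exact fun s hs => hPQ ((hP.1.1.mem_or_mem (hP.1.2 hs)).resolve_right hfP')

end Fwd


/-! ### From the large ring to the small ring -/

section MinimalPrimes

attribute [local instance] MvPolynomial.gradedAlgebra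

variable {K : Type} [Field K] {σ : Type}

lemma HI_minimalPrime {J Q : Ideal (MvPolynomial σ K)} (hJ : HI J) (hQ : Q ∈ J.minimalPrimes) :
    HI Q := by
  have hc : (Q.homogeneousCore (homogeneousSubmodule σ K)).toIdeal ≤ Q :=
    Ideal.toIdeal_homogeneousCore_le _ _
  have hJc : J ≤ (Q.homogeneousCore (homogeneousSubmodule σ K)).toIdeal := by
    rw [← Ideal.IsHomogeneous.toIdeal_homogeneousCore_eq_self (HI_iff.1 hJ)]
    exact Ideal.homogeneousCore_mono _ hQ.1.2
  have h : (Q.homogeneousCore (homogeneousSubmodule σ K)).toIdeal = Q :=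
    le_antisymm hc (hQ.2 ⟨hQ.1.1.homogeneousCore, hJc⟩ hc)
  rw [HI_iff, Ideal.IsHomogeneous.iff_eq]
  exact h

/-- A minimal prime of a radical ideal `J` that avoids `f` is associated to `J : f`. -/
lemma minimalPrime_mem_hAss [Finite σ] {J Q : Ideal (MvPolynomial σ K)} (hJ : HI J)
    (hrad : J.IsRadical) (hQ : Q ∈ J.minimalPrimes) {f : MvPolynomial σ K} (hf : f ∉ Q) :
    Q ∈ hAss (colonI J f) := by
  have := hQ.1.1
  have h : ¬ sInf (J.minimalPrimes \ {Q}) ≤ Q := by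
    intro hle
    obtain ⟨P, hP, hPQ⟩ := exists_le_of_sInf_le
      ((J.finite_minimalPrimes_of_isNoetherianRing _).subset Set.sdiff_subset) hle
    exact hP.2 (le_antisymm hPQ (hQ.2 hP.1.1 hPQ))
  obtain ⟨d, s, hsd, hs, hsQ⟩ := HI.exists_of_not_le
    (HI_sInf fun P hP => HI_minimalPrime hJ hP.1) h
  refine ⟨hQ.1.1, d, s, hsd, ?_⟩
  ext r
  rw [mem_colonI, mem_colonI]
  constructor
  · intro hr
    refine mem_of_forall_minimalPrimes hrad fun P hP => ?_
    by_cases hPQ : P = Q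
    · rw [mul_assoc]
      exact P.mul_mem_right _ (hPQ ▸ hr)
    · exact P.mul_mem_right _ (P.mul_mem_left _ ((Submodule.mem_sInf.1 hs) P ⟨hP, hPQ⟩))
  · intro hr
    exact ((hQ.1.1.mem_or_mem (hQ.1.2 hr)).resolve_right hf |> hQ.1.1.mem_or_mem).resolve_right hsQ

/-- For a radical ideal `J`, the colon ideal `J : f` is the intersection of the minimal primes of
`J` avoiding `f`. -/
lemma mem_colonI_iff_of_radical {J : Ideal (MvPolynomial σ K)} (hrad : J.IsRadical)
    {f s : MvPolynomial σ K} : s ∈ colonI J f ↔ ∀ P ∈ J.minimalPrimes, f ∉ P → s ∈ P := by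
  rw [mem_colonI]
  constructor
  · exact fun h P hP hf => (hP.1.1.mem_or_mem (hP.1.2 h)).resolve_right hf
  · intro h
    refine mem_of_forall_minimalPrimes hrad fun P hP => ?_
    by_cases hf : f ∈ P
    · exact P.mul_mem_left _ hf
    · exact P.mul_mem_right _ (h P hP hf)

end MinimalPrimes

section Bwd

variable {K : Type} [Field K] {m : ℕ}

local notation "SA" => MvPolynomial (Fin m ⊕ Fin m) K
local notation "SB" => MvPolynomial (Fin (m + 1) ⊕ Fin (m + 1)) K
local notation "xl" => xv K (Fin.last m)
local notation "yl" => yv K (Fin.last m)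

/-- A prime over `J` avoiding `a` lies under a prime over `J + (aY - bX)` of larger dimension. -/
lemma exists_line_prime' {J P : Ideal SA} (hP : P.IsPrime) (hJP : J ≤ P) {a b : SA} (ha : a ∉ P) :
    ∃ P'' : Ideal SB, P''.IsPrime ∧ J.map (liftS K m) ⊔ Ideal.span {lin K m a b} ≤ P'' ∧
      P''.comap (liftS K m) = P ∧ xl ∉ P'' ∧ P'' ≤ P.comap (proj K m) ∧ pdim P + 1 ≤ pdim P'' := by
  obtain ⟨P'', h1, h2, h3, h4, h5, h6⟩ := exists_line_prime hP a b ha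
  refine ⟨P'', h1, sup_le ?_ ?_, h2, h4, h5, h6⟩
  · rw [Ideal.map_le_iff_le_comap, h2]
    exact hJP
  · rw [Ideal.span_singleton_le_iff_mem]
    exact h3

/-- If an ideal is stable under setting the last pair of variables to zero and the last variable `X`
is regular modulo it, then the coefficients of every polynomial in `X` it contains lie in its
contraction. -/
lemma eval_mem_map {U' : Ideal SB} (hk : ∀ f ∈ U', liftS K m (proj K m f) ∈ U')
    (hX : ∀ s, xl * s ∈ U' → s ∈ U') (F : Polynomial SA)
    (hF : F.eval₂ (liftS K m).toRingHom xl ∈ U') :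
    F.eval₂ (liftS K m).toRingHom xl ∈ (U'.comap (liftS K m)).map (liftS K m) := by
  have key0 : ∀ F : Polynomial SA, F.eval₂ (liftS K m).toRingHom xl ∈ U' →
      liftS K m (F.coeff 0) ∈ U' := by
    intro F hF
    have h1 := hk _ hF
    have h2 : proj K m (F.eval₂ (liftS K m).toRingHom xl) = F.coeff 0 := by
      have h3 := Polynomial.hom_eval₂ F (liftS K m).toRingHom (proj K m).toRingHom xl
      have h4 : (proj K m).toRingHom.comp (liftS K m).toRingHom = RingHom.id _ :=
        RingHom.ext fun p => proj_liftS p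
      refine h3.trans ?_
      refine (congrArg (fun φ => F.eval₂ φ (proj K m xl)) h4).trans ?_
      show F.eval₂ (RingHom.id _) (proj K m xl) = _
      rw [proj_xv_last, Polynomial.eval₂_at_zero, RingHom.id_apply]
    rwa [h2] at h1
  have key : ∀ i : ℕ, ∀ F : Polynomial SA, F.eval₂ (liftS K m).toRingHom xl ∈ U' →
      liftS K m (F.coeff i) ∈ U' := by
    intro i
    induction i with
    | zero => exact key0
    | succ i ih =>
      intro F hF
      have h0 := key0 F hF
      rw [← Polynomial.coeff_divX]
      refine ih _ (hX _ ?_)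
      have h1 : F.eval₂ (liftS K m).toRingHom xl =
          xl * F.divX.eval₂ (liftS K m).toRingHom xl + liftS K m (F.coeff 0) := by
        conv_lhs => rw [← Polynomial.divX_mul_X_add F]
        rw [Polynomial.eval₂_add, Polynomial.eval₂_mul, Polynomial.eval₂_X, Polynomial.eval₂_C,
          mul_comm]
        rfl
      rw [h1] at hF
      exact (Ideal.add_mem_iff_left _ h0).1 hF
  rw [Polynomial.eval₂_eq_sum_range]
  exact Ideal.sum_mem _ fun i _ => Ideal.mul_mem_right _ _
    (Ideal.mem_map_of_mem _ (key i F hF))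

/-- Modulo `aY - bX`, some power of `a` times any element is a polynomial in `X`. -/
lemma exists_pow_mul_sub (a b : SA) (α : SB) : ∃ (k : ℕ) (F : Polynomial SA),
    liftS K m a ^ k * α - F.eval₂ (liftS K m).toRingHom xl ∈ Ideal.span {lin K m a b} := by
  rw [← ofBool_toBool α]
  generalize toBool α = β
  induction β using MvPolynomial.induction_on with
  | C s =>
    refine ⟨0, Polynomial.C s, ?_⟩
    rw [ofBool_C, Polynomial.eval₂_C, pow_zero, one_mul]
    show liftS K m s - liftS K m s ∈ _
    rw [sub_self]
    exact Ideal.zero_mem _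
  | add p q hp hq =>
    obtain ⟨k, F, h1⟩ := hp
    obtain ⟨l, G, h2⟩ := hq
    refine ⟨k + l, Polynomial.C (a ^ l) * F + Polynomial.C (a ^ k) * G, ?_⟩
    have h3 := Ideal.add_mem _ (Ideal.mul_mem_left _ (liftS K m a ^ l) h1)
      (Ideal.mul_mem_left _ (liftS K m a ^ k) h2)
    convert h3 using 1
    rw [Polynomial.eval₂_add, Polynomial.eval₂_mul, Polynomial.eval₂_mul, Polynomial.eval₂_C,
      Polynomial.eval₂_C, map_add, map_pow, map_pow]
    show _ - (liftS K m a ^ l * _ + liftS K m a ^ k * _) = _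
    ring
  | mul_X p i hp =>
    obtain ⟨k, F, h1⟩ := hp
    rw [map_mul, ofBool_X]
    cases i
    · refine ⟨k + 1, Polynomial.C b * Polynomial.X * F, ?_⟩
      have h3 := Ideal.add_mem _ (Ideal.mul_mem_left _ (liftS K m a * yl) h1)
        (Ideal.mul_mem_left _ (F.eval₂ (liftS K m).toRingHom xl)
          (Ideal.mem_span_singleton_self (lin K m a b)))
      convert h3 using 1
      rw [Polynomial.eval₂_mul, Polynomial.eval₂_mul, Polynomial.eval₂_C, Polynomial.eval₂_X,
        if_neg (by simp), lin]
      show _ - liftS K m b * xl * _ = _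
      ring
    · refine ⟨k, F * Polynomial.X, ?_⟩
      have h3 := Ideal.mul_mem_left _ xl h1
      convert h3 using 1
      rw [Polynomial.eval₂_mul, Polynomial.eval₂_X, if_pos rfl]
      ring

end Bwd


section LinePrimes

variable {K : Type} [Field K] {m : ℕ}

local notation "SA" => MvPolynomial (Fin m ⊕ Fin m) K
local notation "SB" => MvPolynomial (Fin (m + 1) ⊕ Fin (m + 1)) K
local notation "xl" => xv K (Fin.last m)
local notation "yl" => yv K (Fin.last m)

lemma pdim_comap_proj (P : Ideal SA) : pdim (P.comap (proj K m)) = pdim P :=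
  pdim_comap (proj K m).toRingHom proj_surjective P

lemma comap_proj_le {P : Ideal SA} {Q : Ideal SB} (hP : P ≤ Q.comap (liftS K m)) (hx : xl ∈ Q)
    (hy : yl ∈ Q) : P.comap (proj K m) ≤ Q := by
  rw [comap_proj_eq]
  refine sup_le (sup_le (Ideal.map_le_iff_le_comap.2 hP) ?_) ?_
  · rwa [Ideal.span_singleton_le_iff_mem]
  · rwa [Ideal.span_singleton_le_iff_mem]

/-- Below a prime over `J₀ + (pY - qX)` containing the last pair of variables but not `p` there is a
prime over the same ideal which avoids the last variable and has larger dimension. -/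
lemma exists_prime_below {J₀ : Ideal SA} {p q : SA} {Q : Ideal SB} (hQ : Q.IsPrime)
    (hJ : J₀.map (liftS K m) ⊔ Ideal.span {lin K m p q} ≤ Q) (hx : xl ∈ Q) (hy : yl ∈ Q)
    (hp : liftS K m p ∉ Q) : ∃ P : Ideal SB, P.IsPrime ∧
      J₀.map (liftS K m) ⊔ Ideal.span {lin K m p q} ≤ P ∧ xl ∉ P ∧ P ≤ Q ∧
      pdim Q + 1 ≤ pdim P := by
  obtain ⟨P, h1, h2, -, h4, h5, h6⟩ := exists_line_prime' (hQ.comap (liftS K m))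
    (Ideal.map_le_iff_le_comap.1 (le_sup_left.trans hJ)) (a := p) (b := q) hp
  have h7 := comap_proj_le le_rfl hx hy
  refine ⟨P, h1, h2, h4, h5.trans h7, ?_⟩
  have h8 := pdim_anti h7 hQ.ne_top
  rw [pdim_comap_proj] at h8
  omega

lemma sup_span_lin_le_comap_proj {J₀ P : Ideal SA} (h : J₀ ≤ P) (p q : SA) :
    J₀.map (liftS K m) ⊔ Ideal.span {lin K m p q} ≤ P.comap (proj K m) := by
  refine sup_le ?_ ?_
  · rw [Ideal.map_le_iff_le_comap]
    intro s hs
    show proj K m (liftS K m s) ∈ P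
    rw [proj_liftS]
    exact h hs
  · rw [Ideal.span_singleton_le_iff_mem]
    show proj K m (liftS K m p * yl - liftS K m q * xl) ∈ P
    rw [map_sub, map_mul, map_mul, proj_xv_last, proj_yv_last, mul_zero, mul_zero, sub_zero]
    exact P.zero_mem

end LinePrimes

section Main

variable {K : Type} [Field K] {m : ℕ}

local notation "SR" => MvPolynomial (Fin m ⊕ Fin m) K
local notation "SA" => MvPolynomial (Fin (m + 1) ⊕ Fin (m + 1)) K
local notation "SB" => MvPolynomial (Fin (m + 2) ⊕ Fin (m + 2)) K
local notation "xa" => xv K (Fin.last m)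
local notation "ya" => yv K (Fin.last m)

/-- The prime of the large ring generated by a prime of the small ring and two pairs of variables
contains the two-step extension. -/
lemma sup_span_lin_le_map_comap {J₀ P : Ideal SR} (h : J₀ ≤ P) (p q : SR) :
    (J₀.map (liftS K m) ⊔ Ideal.span {lin K m p q}).map (liftS K (m + 1)) ⊔
      Ideal.span {lin K (m + 1) xa ya} ≤ (P.comap (proj K m)).map (liftS K (m + 1)) := by
  refine sup_le (Ideal.map_mono (sup_span_lin_le_comap_proj h p q)) ?_
  rw [Ideal.span_singleton_le_iff_mem, lin]
  refine Ideal.sub_mem _ (Ideal.mul_mem_right _ _ (Ideal.mem_map_of_mem _ ?_))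
    (Ideal.mul_mem_right _ _ (Ideal.mem_map_of_mem _ ?_))
  · show proj K m xa ∈ P
    rw [proj_xv_last]
    exact P.zero_mem
  · show proj K m ya ∈ P
    rw [proj_yv_last]
    exact P.zero_mem

lemma map_comap_proj_le {P : Ideal SR} {Q' : Ideal SB}
    (hP : P ≤ (Q'.comap (liftS K (m + 1))).comap (liftS K m))
    (hx : liftS K (m + 1) xa ∈ Q') (hy : liftS K (m + 1) ya ∈ Q') :
    (P.comap (proj K m)).map (liftS K (m + 1)) ≤ Q' :=
  Ideal.map_le_iff_le_comap.2 (comap_proj_le hP hx hy)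

lemma comap_comap_map_comap (P : Ideal SR) :
    (((P.comap (proj K m)).map (liftS K (m + 1))).comap (liftS K (m + 1))).comap (liftS K m) =
      P := by
  rw [comap_map_liftS]
  ext s
  show proj K m (liftS K m s) ∈ P ↔ _
  rw [proj_liftS]

/-- Backward direction: the approximately Cohen-Macaulay property descends from
`J' = J + (aY - bX)` to `J = J₀ + (pb - qa)`, provided the minimal primes of `J'` are stable under
killing the last pair of variables and satisfy the combinatorial conditions of binomial edge
ideals. -/
theorem isACM_of_extend {J₀ : Ideal SR} {p q : SR} {J : Ideal SA}
    (hJdef : J = J₀.map (liftS K m) ⊔ Ideal.span {lin K m p q}) {J' : Ideal SB}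
    (hJ'def : J' = J.map (liftS K (m + 1)) ⊔ Ideal.span {lin K (m + 1) xa ya})
    (hJ : HI J) (htop : J ≠ ⊤) (hrad : J.IsRadical) (hmin : ∀ P ∈ J.minimalPrimes, xa ∉ P)
    (hJ' : HI J') (htop' : J' ≠ ⊤) (hrad' : J'.IsRadical)
    (hkill : ∀ P ∈ J'.minimalPrimes, ∀ f ∈ P, liftS K (m + 1) (proj K (m + 1) f) ∈ P)
    (hX : ∀ P ∈ J'.minimalPrimes, xv K (Fin.last (m + 1)) ∉ P)
    (hxy : ∀ P ∈ J'.minimalPrimes, liftS K (m + 1) xa ∈ P → liftS K (m + 1) ya ∈ P)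
    (hp : ∀ P ∈ J'.minimalPrimes, liftS K (m + 1) xa ∈ P → liftS K (m + 1) (liftS K m p) ∉ P)
    (h : IsACM K J') : IsACM K J := by
  obtain ⟨ef, f, hf, -, hdU', hdJ', hfP⟩ := exists_of_isACM hJ' htop' hrad' h
  set U' := colonI J' f with hU'
  have hU'H : HI U' := HI_colonI hJ' hf
  have hJU' : J' ≤ U' := fun s hs => Ideal.mul_mem_right _ _ hs
  have hmem : ∀ s, s ∈ U' ↔ ∀ P ∈ J'.minimalPrimes, f ∉ P → s ∈ P := fun s =>
    mem_colonI_iff_of_radical hrad'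
  have hU'P : ∀ P : Ideal SB, P.IsPrime → J' ≤ P → pdim J' ≤ pdim P → U' ≤ P :=
    fun P hP hle hd s hs => (hP.mem_or_mem (hle hs)).resolve_right (hfP P hP hle hd)
  have hkillU : ∀ s ∈ U', liftS K (m + 1) (proj K (m + 1) s) ∈ U' := fun s hs =>
    (hmem _).2 fun P hP hfP => hkill P hP s ((hmem s).1 hs P hP hfP)
  have hXU : ∀ s, xv K (Fin.last (m + 1)) * s ∈ U' → s ∈ U' := fun s hs =>
    (hmem _).2 fun P hP hfP =>
      (hP.1.1.mem_or_mem ((hmem _).1 hs P hP hfP)).resolve_left (hX P hP)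
  have hlin : lin K (m + 1) xa ya ∈ J' :=
    hJ'def ▸ Ideal.mem_sup_right (Ideal.mem_span_singleton_self _)
  have hJJ' : ∀ Q : Ideal SB, J' ≤ Q → J ≤ Q.comap (liftS K (m + 1)) := fun Q hQ =>
    Ideal.map_le_iff_le_comap.1 ((le_sup_left.trans hJ'def.ge).trans hQ)
  have hline : ∀ P : Ideal SA, P.IsPrime → J ≤ P → xa ∉ P → ∃ P'' : Ideal SB, P''.IsPrime ∧
      J' ≤ P'' ∧ P''.comap (liftS K (m + 1)) = P ∧ pdim P + 1 ≤ pdim P'' := by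
    intro P hP hJP ha
    obtain ⟨P'', h1, h2, h3, -, -, h6⟩ := exists_line_prime' hP hJP (b := ya) ha
    exact ⟨P'', h1, hJ'def.le.trans h2, h3, h6⟩
  have hJle : pdim J + 1 ≤ pdim J' := by
    obtain ⟨P, hP, hPd⟩ := exists_minimalPrime_pdim htop
    obtain ⟨P'', h1, h2, -, h4⟩ := hline P hP.1.1 hP.1.2 (hmin P hP)
    have := pdim_anti h2 h1.ne_top
    omega
  have hJ1 : 1 ≤ pdim J := by
    obtain ⟨P, hP, hPd⟩ := exists_minimalPrime_pdim htop
    have := hP.1.1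
    have hlt : P < mIdeal K _ := lt_of_le_of_ne ((HI_minimalPrime hJ hP).le_mIdeal hP.1.1.ne_top)
      fun h => hmin P hP (h ▸ xv_mem_mIdeal _)
    have := pdim_lt hlt mIdeal_ne_top
    omega
  obtain ⟨e, he⟩ : ∃ e, pdim J' = e + 2 := ⟨pdim J' - 2, by omega⟩
  rw [he] at hdU' hdJ' hfP hU'P
  -- `U'` is Cohen-Macaulay of dimension `e + 2`, hence unmixed.
  have hdQ : ∀ Q ∈ J'.minimalPrimes, f ∉ Q → e + 2 ≤ pdim Q := fun Q hQ hfQ =>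
    dep_le_pdim_hAss _ hU'H (minimalPrime_mem_hAss hJ' hrad' hQ hfQ) hdU'
  set U := U'.comap (liftS K (m + 1)) with hU
  have hUH : HI U := HI_comap_liftS hU'H
  have hJU : J ≤ U := hJJ' U' hJU'
  have hdU : dep (mIdeal K _) e U := dep_comap_liftS e hU'H hkillU hdU'
  -- `a` is regular modulo `U`: a component `Q'` of `U'` containing `a` lies, after contraction, over
  -- a prime avoiding `a` of dimension large enough for its lift to contain `U'`.
  have haU : ∀ s, xa * s ∈ U → s ∈ U := by
    intro s hs
    have hs' : liftS K (m + 1) xa * liftS K (m + 1) s ∈ U' := by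
      rw [← map_mul]
      exact hs
    refine (hmem _).2 fun Q' hQ' hfQ' => ?_
    by_cases ha : liftS K (m + 1) xa ∈ Q'
    · have hQp := hQ'.1.1
      obtain ⟨P, h1, h2, h3, h4, h5⟩ := exists_prime_below (Q := Q'.comap (liftS K (m + 1)))
        (hQp.comap _) (hJdef ▸ hJJ' Q' hQ'.1.2) ha (hxy Q' hQ' ha) (hp Q' hQ' ha)
      obtain ⟨P'', h6, h7, h8, h9⟩ := hline P h1 (hJdef.le.trans h2) h3
      have h10 := pdim_le_comap hQp
      have h11 := hdQ Q' hQ' hfQ'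
      have h12 := hU'P P'' h6 h7 (by omega) hs'
      have h13 : xa * s ∈ P''.comap (liftS K (m + 1)) := by
        show liftS K (m + 1) (xa * s) ∈ P''
        rwa [map_mul]
      rw [h8] at h13
      exact h4 ((h1.mem_or_mem h13).resolve_left h3)
    · exact (hQ'.1.1.mem_or_mem ((hmem _).1 hs' Q' hQ' hfQ')).resolve_left ha
  have haJ : ∀ s, xa * s ∈ J → s ∈ J := fun s hs => mem_of_forall_minimalPrimes hrad fun P hP =>
    (hP.1.1.mem_or_mem (hP.1.2 hs)).resolve_left (hmin P hP)
  set W := U.map (liftS K (m + 1)) ⊔ Ideal.span {lin K (m + 1) xa ya} with hW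
  have hWH : HI W := (HI_map_liftS hUH).sup (HI_span_singleton
    (lin_homogeneous (isHomogeneous_X K _) (isHomogeneous_X K _)))
  have hJW : J' ≤ W := hJ'def.le.trans (sup_le_sup_right (Ideal.map_mono hJU) _)
  have hWU : W ≤ U' := by
    refine sup_le (Ideal.map_le_iff_le_comap.2 le_rfl) ?_
    rw [Ideal.span_singleton_le_iff_mem]
    exact hJU' hlin
  have hWiff : ∀ k, dep (mIdeal K _) (k + 1) W ↔ dep (mIdeal K _) k U := fun k =>
    (dep_sup_span_iff mIdeal_ne_top (lin_mem_mIdeal _ _) (lin_regular haU)).trans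
      (dep_map_liftS_iff _ _)
  have hdW : dep (mIdeal K _) (e + 1) W := (hWiff e).2 hdU
  have hUW : U' ≤ W := by
    by_contra hne
    -- `f` kills `U' / W`, so an associated prime `Q'` of `W` with a witness in `U'` contains `f`.
    obtain ⟨dz, z₀, -, hz₀, hz₀W⟩ := hU'H.exists_of_not_le hne
    obtain ⟨Q', hQ', hAQ, z, hz, hQz⟩ := exists_hAss hWH hU'H
      (hWH.sup (HI_span_singleton hf)) hz₀ hz₀W (by
        intro r hr
        rw [Submodule.mem_sup] at hr
        obtain ⟨w, hw, g, hg, rfl⟩ := hr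
        obtain ⟨g', rfl⟩ := Ideal.mem_span_singleton'.1 hg
        rw [add_mul, mul_assoc, mul_comm f]
        exact Ideal.add_mem _ (Ideal.mul_mem_right _ _ hw)
          (Ideal.mul_mem_left _ _ (hJW (mem_colonI.1 hz₀))))
    have hQd : e + 1 ≤ pdim Q' := dep_le_pdim_hAss _ hWH hQ' hdW
    have hQp : Q'.IsPrime := hQ'.1
    have hWQ : W ≤ Q' := le_sup_left.trans hAQ
    have hle : sInf {P | P ∈ J'.minimalPrimes ∧ f ∈ P} ≤ Q' := by
      intro r hr
      rw [hQz, mem_colonI]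
      refine hJW (mem_of_forall_minimalPrimes hrad' fun P hP => ?_)
      by_cases hfP : f ∈ P
      · exact P.mul_mem_right _ ((Submodule.mem_sInf.1 hr) P ⟨hP, hfP⟩)
      · exact P.mul_mem_left _ ((hmem z).1 hz P hP hfP)
    obtain ⟨P₁, ⟨hP₁, hfP₁⟩, hPQ⟩ := exists_le_of_sInf_le
      ((J'.finite_minimalPrimes_of_isNoetherianRing _).subset fun P hP => hP.1) hle
    have := hP₁.1.1
    have hP₁d : pdim P₁ < e + 2 := by
      by_contra hlt
      exact hfP P₁ hP₁.1.1 hP₁.1.2 (by omega) hfP₁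
    -- Both primes have dimension `e + 1`.
    have hQP : P₁ = Q' := by
      by_contra hne
      have := pdim_lt (lt_of_le_of_ne hPQ hne) hQp.ne_top
      omega
    rw [hQP] at hP₁ hP₁d hfP₁
    by_cases ha : liftS K (m + 1) xa ∈ Q'
    · have hb := hxy Q' hP₁ ha
      set P := (Q'.comap (liftS K (m + 1))).comap (liftS K m) with hP
      have hPp : P.IsPrime := (hQp.comap _).comap _
      have hJ₀ : ∀ Q : Ideal SB, J' ≤ Q →
          J₀ ≤ (Q.comap (liftS K (m + 1))).comap (liftS K m) := fun Q hQ =>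
        Ideal.map_le_iff_le_comap.1 (le_sup_left.trans (hJdef.ge.trans (hJJ' Q hQ)))
      -- A prime generated by a prime of the smallest ring and two pairs of variables that lies
      -- below `Q'` equals `Q'`, by minimality.
      have huniq : ∀ P₀ : Ideal SR, P₀.IsPrime → J₀ ≤ P₀ → P₀ ≤ P →
          (P₀.comap (proj K m)).map (liftS K (m + 1)) = Q' := by
        intro P₀ h1 h2 h3
        have h4 := map_comap_proj_le h3 ha hb
        refine le_antisymm h4 (hP₁.2 ⟨map_liftS_isPrime (h1.comap _), ?_⟩ h4)
        rw [hJ'def, hJdef]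
        exact sup_span_lin_le_map_comap h2 p q
      have hPd : pdim Q' = pdim P + 2 := by
        rw [← huniq P hPp (hJ₀ Q' hP₁.1.2) le_rfl, pdim_map_liftS (hPp.comap _).ne_top,
          pdim_comap_proj]
      have hle : sInf ((fun I : Ideal SB => I.comap (liftS K (m + 1))) ''
          {P | P ∈ J'.minimalPrimes ∧ f ∉ P}) ≤ Q'.comap (liftS K (m + 1)) := by
        refine le_trans (fun s hs => ?_) (Ideal.map_le_iff_le_comap.1 (le_sup_left.trans hWQ))
        refine (hmem _).2 fun P hP hfP => ?_
        exact (Submodule.mem_sInf.1 hs) _ ⟨P, ⟨hP, hfP⟩, rfl⟩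
      have := hQp.comap (liftS K (m + 1))
      obtain ⟨_, ⟨P', ⟨hP', hfP'⟩, rfl⟩, hP'Q⟩ := exists_le_of_sInf_le
        (((J'.finite_minimalPrimes_of_isNoetherianRing _).subset fun P hP => hP.1).image _) hle
      have hP'p := hP'.1.1
      have hP'd := hdQ P' hP' hfP'
      -- `P'` contracts to `P` in the smallest ring, like `Q'`, which bounds its dimension.
      have h1 := huniq ((P'.comap (liftS K (m + 1))).comap (liftS K m))
        ((hP'p.comap _).comap _) (hJ₀ P' hP'.1.2) (Ideal.comap_mono hP'Q)
      have h2 : (P'.comap (liftS K (m + 1))).comap (liftS K m) = P := by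
        rw [hP, ← h1, comap_comap_map_comap]
      by_cases ha' : liftS K (m + 1) xa ∈ P'
      · have h3 := map_comap_proj_le le_rfl ha' (hxy P' hP' ha')
        rw [h1] at h3
        exact hfP' (h3 hfP₁)
      · have h3 := pdim_le_comap_of_mem hP'p (a := xa) (b := ya) (hP'.1.2 hlin) ha'
        have h4 : liftS K m p ∉ P'.comap (liftS K (m + 1)) := by
          intro h5
          have h6 : p ∈ (P'.comap (liftS K (m + 1))).comap (liftS K m) := h5
          rw [h2] at h6
          exact hp Q' hP₁ ha h6
        have h5 := pdim_le_comap_of_mem (hP'p.comap (liftS K (m + 1))) (a := p) (b := q)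
          (hJJ' P' hP'.1.2 (hJdef.ge (Ideal.mem_sup_right (Ideal.mem_span_singleton_self _)))) h4
        rw [h2] at h5
        omega
    · -- Eliminating the last `y` shows that a power of `a` times `z` lies in `W`.
      obtain ⟨k, F, hF⟩ := exists_pow_mul_sub xa ya z
      have h1 := (le_sup_right : _ ≤ W) hF
      have h2 : F.eval₂ (liftS K (m + 1)).toRingHom (xv K (Fin.last (m + 1))) ∈ U' := by
        have h3 := Ideal.sub_mem _ (Ideal.mul_mem_left _ (liftS K (m + 1) xa ^ k) hz) (hWU h1)
        rwa [sub_sub_cancel] at h3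
      have h3 := (le_sup_left : _ ≤ W) (eval_mem_map hkillU hXU F h2)
      have h4 := Ideal.add_mem _ h1 h3
      rw [sub_add_cancel] at h4
      have h5 : liftS K (m + 1) xa ^ k ∈ Q' := by
        rw [hQz, mem_colonI]
        exact h4
      exact ha (hQp.mem_of_pow_mem _ h5)
  have hWeq : W = U' := le_antisymm hWU hUW
  have hdU1 : dep (mIdeal K _) (e + 1) U := (hWiff _).1 (hWeq ▸ hdU')
  have hdJ1 : dep (mIdeal K _) e J := by
    have h1 : dep (mIdeal K _) (e + 1) J' := hdJ'
    rw [hJ'def] at h1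
    exact (dep_map_liftS_iff _ _).1
      ((dep_sup_span_iff mIdeal_ne_top (lin_mem_mIdeal _ _) (lin_regular haJ)).1 h1)
  have hdim : pdim J = e + 1 := by
    have := (dep_le_pdim hUH hdU1).trans (pdim_anti hJU hdU1.ne_top)
    omega
  refine isACM_of hJ htop hrad hUH hJU hJ1 (hdim ▸ hdU1) (by rw [hdim]; exact hdJ1) ?_
  intro P hP hJP hPd
  obtain ⟨P₀, hP₀, hP₀P⟩ := Ideal.exists_minimalPrimes_le hJP
  have h0 := pdim_anti hP₀P hP.ne_top
  obtain ⟨P'', h1, h2, h3, h4⟩ := hline P₀ hP₀.1.1 hP₀.1.2 (hmin P₀ hP₀)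
  have h5 := hU'P P'' h1 h2 (by omega)
  exact (Ideal.comap_mono h5).trans (h3.le.trans hP₀P)

end Main


/-! ### Attaching a whisker to a graph -/

section Whisker

variable {K : Type} [Field K] {n : ℕ}

/-- If a minimal prime contains the variables of `u`, then it contains no variables of a vertex that
becomes free once `u` is deleted. -/
lemma not_mem_of_mem {G : SimpleGraph (Fin n)} {P : Ideal (MvPolynomial (Fin n ⊕ Fin n) K)}
    (hP : P ∈ (bei K G).minimalPrimes) {u v : Fin n} (hu : xv K u ∈ P) (hv : IsFree (delV G u) v)
    (hvu : v ≠ u) : xv K v ∉ P := by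
  have hPp := hP.1.1
  have hle := hP.1.2
  rw [bei_eq_inf G u] at hle
  rcases hPp.inf_le.1 hle with h | h
  · have h1 : P ∈ (bei K (addN G u)).minimalPrimes := by
      refine ⟨⟨hPp, h⟩, fun Q hQ hQP => hP.2 ⟨hQ.1, le_trans ?_ hQ.2⟩ hQP⟩
      exact bei_mono fun i j h => Or.inl h
    exact absurd hu ((good_of_minimalPrime h1).free u (isFree_addN_self G u))
  · obtain ⟨s, hs, hg, he⟩ := exists_good (K := K) (delV G u)
    have h1 : sInf ((fun Q => Q.comap (kill K u)) '' s) ≤ P := by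
      refine le_trans (fun f hf => ?_) h
      rw [Ideal.mem_comap, ← he, Submodule.mem_sInf]
      exact fun Q hQ => (Submodule.mem_sInf.1 hf) _ ⟨Q, hQ, rfl⟩
    obtain ⟨_, ⟨Q, hQ, rfl⟩, hQP⟩ := exists_le_of_sInf_le (hs.image _) h1
    have hQp := (hg Q hQ).prime
    have h2 : bei K G ≤ Q.comap (kill K u) := by
      rw [bei_eq_inf G u]
      exact inf_le_right.trans (Ideal.comap_mono (he ▸ sInf_le hQ))
    have h3 := hP.2 ⟨hQp.comap _, h2⟩ hQP
    intro hvP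
    have h4 : kill K u (xv K v) ∈ Q := h3 hvP
    rw [kill_xv, if_neg hvu] at h4
    exact (hg Q hQ).free v hv h4

lemma extendG_adj_castSucc {G : SimpleGraph (Fin n)} {v i j : Fin n} :
    (extendG G v).Adj i.castSucc j.castSucc ↔ G.Adj i j := by
  rw [extendG, SimpleGraph.fromRel_adj]
  constructor
  · rintro ⟨-, (⟨ha, hb, h⟩ | ⟨-, h⟩) | (⟨ha, hb, h⟩ | ⟨-, h⟩)⟩
    · simpa using h
    · exact absurd h (Fin.castSucc_ne_last _)
    · simpa using h.symm
    · exact absurd h (Fin.castSucc_ne_last _)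
  · intro h
    refine ⟨fun h' => h.ne (Fin.castSucc_injective _ h'), Or.inl (Or.inl
      ⟨Fin.castSucc_ne_last _, Fin.castSucc_ne_last _, ?_⟩)⟩
    simpa using h

lemma extendG_adj_last {G : SimpleGraph (Fin n)} {v i : Fin n} :
    (extendG G v).Adj i.castSucc (Fin.last n) ↔ i = v := by
  rw [extendG, SimpleGraph.fromRel_adj]
  constructor
  · rintro ⟨-, (⟨ha, hb, h⟩ | ⟨h, -⟩) | (⟨ha, hb, h⟩ | ⟨h, -⟩)⟩
    · exact absurd rfl hb
    · exact Fin.castSucc_injective _ h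
    · exact absurd rfl ha
    · exact absurd h.symm (Fin.castSucc_ne_last _)
  · rintro rfl
    exact ⟨Fin.castSucc_ne_last _, Or.inl (Or.inr ⟨rfl, rfl⟩)⟩

lemma eq_of_extendG_adj_last {G : SimpleGraph (Fin n)} {v : Fin n} {i : Fin (n + 1)}
    (h : (extendG G v).Adj (Fin.last n) i) : i = v.castSucc := by
  induction i using Fin.lastCases with
  | last => exact absurd h (SimpleGraph.irrefl _)
  | cast i => rw [extendG_adj_last.1 h.symm]

lemma isFree_extendG_last (G : SimpleGraph (Fin n)) (v : Fin n) :
    IsFree (extendG G v) (Fin.last n) := fun _ _ hi hj hij =>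
  absurd ((eq_of_extendG_adj_last hi).trans (eq_of_extendG_adj_last hj).symm) hij

lemma liftS_bin (i j : Fin n) : liftS K n (bin K i j) = bin K i.castSucc j.castSucc := by
  simp only [bin, map_sub, map_mul, liftS_xv, liftS_yv]

lemma lin_eq_bin (v : Fin n) : lin K n (xv K v) (yv K v) = bin K v.castSucc (Fin.last n) := by
  rw [lin, bin, liftS_xv, liftS_yv]
  ring

lemma bei_extendG (G : SimpleGraph (Fin n)) (v : Fin n) :
    bei K (extendG G v) =
      (bei K G).map (liftS K n) ⊔ Ideal.span {lin K n (xv K v) (yv K v)} := by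
  have hlast : lin K n (xv K v) (yv K v) ∈
      (bei K G).map (liftS K n) ⊔ Ideal.span {lin K n (xv K v) (yv K v)} :=
    Ideal.mem_sup_right (Ideal.mem_span_singleton_self _)
  rw [lin_eq_bin] at hlast ⊢
  apply le_antisymm
  · rw [bei_le_iff]
    intro i j hij
    induction i using Fin.lastCases with
    | last =>
      rw [eq_of_extendG_adj_last hij, bin_swap (Fin.last n), Ideal.neg_mem_iff]
      exact hlast
    | cast i =>
      induction j using Fin.lastCases with
      | last =>
        rw [extendG_adj_last.1 hij]
        exact hlast
      | cast j =>
        rw [← liftS_bin]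
        exact Ideal.mem_sup_left (Ideal.mem_map_of_mem _ (bin_mem_bei (extendG_adj_castSucc.1 hij)))
  · refine sup_le ?_ ?_
    · rw [Ideal.map_le_iff_le_comap, bei_le_iff]
      intro i j hij
      rw [Ideal.mem_comap, liftS_bin]
      exact bin_mem_bei (extendG_adj_castSucc.2 hij)
    · rw [Ideal.span_singleton_le_iff_mem]
      exact bin_mem_bei (extendG_adj_last.2 rfl)

/-- A graph whose last vertex has degree one arises by attaching an edge. -/
lemma exists_eq_extendG (G : SimpleGraph (Fin (n + 1))) (h : deg G (Fin.last n) = 1) :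
    ∃ (H : SimpleGraph (Fin n)) (u : Fin n), G = extendG H u := by
  rw [deg, Nat.card_eq_one_iff_unique] at h
  obtain ⟨hsub, ⟨⟨u, hu⟩⟩⟩ := h
  induction u using Fin.lastCases with
  | last => exact absurd hu (SimpleGraph.irrefl _)
  | cast u =>
    have huniq : ∀ i : Fin n, G.Adj (Fin.last n) i.castSucc ↔ i = u := by
      intro i
      constructor
      · intro hi
        exact Fin.castSucc_injective _ (congrArg Subtype.val
          (hsub.elim ⟨i.castSucc, hi⟩ ⟨u.castSucc, hu⟩))
      · rintro rfl
        exact hu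
    refine ⟨G.comap Fin.castSucc, u, ?_⟩
    ext i j
    induction i using Fin.lastCases with
    | last =>
      induction j using Fin.lastCases with
      | last => simp
      | cast j => rw [huniq, SimpleGraph.adj_comm, extendG_adj_last]
    | cast i =>
      induction j using Fin.lastCases with
      | last => rw [SimpleGraph.adj_comm, huniq, extendG_adj_last]
      | cast j => rw [extendG_adj_castSucc, SimpleGraph.comap_adj]

/-- Once its other neighbour is deleted, a vertex of degree one carrying a whisker is free. -/
lemma isFree_delV_extendG (H : SimpleGraph (Fin n)) (u : Fin n) :
    IsFree (delV (extendG (extendG H u) (Fin.last n)) u.castSucc.castSucc)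
      (Fin.last n).castSucc := by
  have key : ∀ i, (delV (extendG (extendG H u) (Fin.last n)) u.castSucc.castSucc).Adj
      (Fin.last n).castSucc i → i = Fin.last (n + 1) := by
    rintro i ⟨h1, -, h2⟩
    induction i using Fin.lastCases with
    | last => rfl
    | cast i =>
      rw [extendG_adj_castSucc] at h1
      exact absurd (congrArg Fin.castSucc (eq_of_extendG_adj_last h1)) h2
  exact fun i j hi hj hij => absurd ((key i hi).trans (key j hj).symm) hij

/-- The equivalence for a graph with an edge attached, after attaching one more edge at its end. -/
lemma isACM_extendG_iff (H : SimpleGraph (Fin n)) (u : Fin n) :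
    IsACM K (bei K (extendG H u)) ↔ IsACM K (bei K (extendG (extendG H u) (Fin.last n))) := by
  have hmin : ∀ P ∈ (bei K (extendG H u)).minimalPrimes, xv K (Fin.last n) ∉ P := fun P hP =>
    (good_of_minimalPrime hP).free _ (isFree_extendG_last H u)
  have hext := bei_extendG (K := K) (extendG H u) (Fin.last n)
  constructor
  · intro h
    rw [hext]
    exact isACM_extend (HI_bei _) (bei_ne_top _) (bei_isRadical _) (isHomogeneous_X K _)
      (isHomogeneous_X K _) hmin (hext ▸ bei_isRadical _) h
  · refine isACM_of_extend (bei_extendG H u) hext (HI_bei _) (bei_ne_top _) (bei_isRadical _) hmin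
      (HI_bei _) (bei_ne_top _) (bei_isRadical _) ?_ ?_ ?_ ?_
    · intro P hP f hf
      rw [liftS_proj]
      exact (good_of_minimalPrime hP).kill _ f hf
    · exact fun P hP => (good_of_minimalPrime hP).free _ (isFree_extendG_last _ _)
    · intro P hP h
      rw [liftS_xv] at h
      rw [liftS_yv]
      exact ((good_of_minimalPrime hP).xy _).1 h
    · intro P hP h h'
      rw [liftS_xv] at h
      rw [liftS_xv, liftS_xv] at h'
      refine not_mem_of_mem hP h' (isFree_delV_extendG H u) ?_ h
      exact fun h => Fin.castSucc_ne_last u (Fin.castSucc_injective _ h).symm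

end Whisker

/-- Let `G` be a connected simple graph on `[n]` having a vertex of
degree `1`, labeled `n`, and let `G′` be the graph on `[n+1]` obtained from `G` by
attaching the edge `{n, n+1}`.  Then `S/J_G` is approximately Cohen-Macaulay if and
only if `S′/J_{G′}` is approximately Cohen-Macaulay. -/
theorem statement3 (K : Type) [Field K] (n : ℕ) (hn : 0 < n)
    (G : SimpleGraph (Fin n)) (hG : G.Connected)
    (hdeg : deg G ⟨n - 1, by omega⟩ = 1) :
    IsACM K (bei K G) ↔ IsACM K (bei K (extendG G ⟨n - 1, by omega⟩)) := by
  obtain ⟨m, rfl⟩ : ∃ m, n = m + 1 := ⟨n - 1, by omega⟩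
  obtain ⟨H, u, rfl⟩ := exists_eq_extendG G hdeg
  exact isACM_extendG_iff H u

end BEIPaper
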